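/- arXiv:1301.6419 — 6 statements merged into one kernel-verified Lean document; each statement's English description precedes it below -/
import Mathlib

section
/- Let G be a branch group acting on a rooted tree T and let H be a normal subgroup of finite index in G. Then in any ascending chain (K_i)_{i∈ℕ} of normal subgroups of H there are at most 2^{|G:H|−1} indices i for which the factor K_i/K_{i-1} is not virtually soluble. -/
/-!  Common definitions: rooted trees of type `(m n)`, tree automorphisms,
rigid stabilizers, branch groups, and auxiliary notions. -/

universe u

/-- Vertices of the rooted tree of type `m`: finite sequences `(x_0, …, x_{n-1})`
with `x_i ∈ {1, …, m i}` (encoded as `Fin (m i)`). -/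
def Vertex (m : ℕ → ℕ) : Type := Σ n : ℕ, ∀ i : Fin n, Fin (m i)

namespace Vertex

variable {m : ℕ → ℕ}

/-- The level of a vertex: its length. -/
def level (v : Vertex m) : ℕ := v.1

/-- `v` is a (weak) prefix of `w`; i.e. `w` lies in the subtree `T_v`
(`w = v` or `w` is a descendant of `v`). -/
def IsPrefix (v w : Vertex m) : Prop :=
  ∃ h : v.1 ≤ w.1, ∀ i : Fin v.1, w.2 (Fin.castLE h i) = v.2 i

/-- `w` is a child (one-step extension) of `v`. -/
def IsChild (v w : Vertex m) : Prop := w.1 = v.1 + 1 ∧ IsPrefix v w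

end Vertex

/-- The `n`-th layer `L_n` of the tree: all vertices of level `n`. -/
def layer (m : ℕ → ℕ) (n : ℕ) : Set (Vertex m) := {v | v.1 = n}

section Rist

variable {m : ℕ → ℕ} (G : Type*) [Group G] [MulAction G (Vertex m)]

/-- The rigid stabilizer of a vertex `v`: all elements fixing every vertex
outside the subtree `T_v`. -/
def rist (v : Vertex m) : Subgroup G :=
  ⨅ w ∈ {w : Vertex m | ¬ Vertex.IsPrefix v w}, MulAction.stabilizer G w

/-- The subgroup generated by the rigid stabilizers of the vertices in `X`. -/
def ristSet (X : Set (Vertex m)) : Subgroup G := ⨆ v ∈ X, rist G v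

/-- `rist_G(n)`, the rigid stabilizer of the `n`-th layer. -/
def ristLayer (m : ℕ → ℕ) (G : Type*) [Group G] [MulAction G (Vertex m)] (n : ℕ) :
    Subgroup G :=
  ristSet G (layer m n)

/-- The orbit of the vertex `v` under a subgroup `H ≤ G`. -/
def subOrbit (H : Subgroup G) (v : Vertex m) : Set (Vertex m) :=
  {w | ∃ h ∈ H, h • v = w}

/-- The set of orbits of a subgroup `H ≤ G` on a set `X` of vertices. -/
def orbitsOn (H : Subgroup G) (X : Set (Vertex m)) : Set (Set (Vertex m)) :=
  (fun v => subOrbit G H v) '' X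

end Rist

/-- `G` is a branch group on the rooted tree of type `m` (with respect to the given
action): the action is faithful and by tree automorphisms, `G` acts transitively on
each layer, and each `rist_G(n)` has finite index in `G`. -/
structure IsBranchGroup (m : ℕ → ℕ) (G : Type*) [Group G] [MulAction G (Vertex m)] :
    Prop where
  faithful : ∀ g : G, (∀ v : Vertex m, g • v = v) → g = 1
  aut : ∀ (g : G) (v w : Vertex m), Vertex.IsChild v w ↔ Vertex.IsChild (g • v) (g • w)
  trans : ∀ v w : Vertex m, v.1 = w.1 → ∃ g : G, g • v = w
  ristFiniteIndex : ∀ n : ℕ, (ristLayer m G n).FiniteIndex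

/-- A group is virtually soluble if it has a soluble subgroup of finite index. -/
def VirtuallySolvable (Γ : Type*) [Group Γ] : Prop :=
  ∃ S : Subgroup Γ, S.FiniteIndex ∧ IsSolvable ↥S

/-- A group is virtually abelian if it has an abelian subgroup of finite index. -/
def VirtuallyAbelian (Γ : Type*) [Group Γ] : Prop :=
  ∃ S : Subgroup Γ, S.FiniteIndex ∧ ∀ a ∈ S, ∀ b ∈ S, a * b = b * a

/-- For subgroups `A ≤ B` of a group with `A` normalised by `B`, this says that the
factor `B/A` belongs to the class `𝔛`. -/
def FactorIn (𝔛 : (Γ : Type u) → [inst : Group Γ] → Prop) {G : Type u} [Group G]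
    (A B : Subgroup G) : Prop :=
  ∃ hn : (A.subgroupOf B).Normal, letI := hn; 𝔛 (↥B ⧸ A.subgroupOf B)

/-- The factor `B/A` is virtually soluble. -/
def FactorVirtuallySolvable {G : Type*} [Group G] (A B : Subgroup G) : Prop :=
  ∃ hn : (A.subgroupOf B).Normal,
    letI := hn; VirtuallySolvable (↥B ⧸ A.subgroupOf B)

/-- The factor `B/A` is virtually abelian. -/
def FactorVirtuallyAbelian {G : Type*} [Group G] (A B : Subgroup G) : Prop :=
  ∃ hn : (A.subgroupOf B).Normal,
    letI := hn; VirtuallyAbelian (↥B ⧸ A.subgroupOf B)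

/-- `Γ` has `r` infinite normal subgroups that generate their direct product in `Γ`:
each of them intersects trivially the subgroup generated by the others. -/
def HasIndepFamily (Γ : Type*) [Group Γ] (r : ℕ) : Prop :=
  ∃ N : Fin r → Subgroup Γ, (∀ i, (N i).Normal) ∧ (∀ i, Infinite ↥(N i)) ∧
    ∀ i, N i ⊓ (⨆ j ∈ ({i}ᶜ : Set (Fin r)), N j) = ⊥

namespace BranchChain

open Vertex commutatorElement

variable {m : ℕ → ℕ}

theorem pre_refl (v : Vertex m) : IsPrefix v v := ⟨le_refl _, fun _ => rfl⟩

theorem pre_trans {u v w : Vertex m} (h1 : IsPrefix u v) (h2 : IsPrefix v w) :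
    IsPrefix u w := by
  obtain ⟨a, ha⟩ := h1
  obtain ⟨b, hb⟩ := h2
  refine ⟨a.trans b, fun i => ?_⟩
  rw [← ha i, ← hb]
  rfl

theorem pre_eq {u v w : Vertex m} (h1 : IsPrefix u w) (h2 : IsPrefix v w) (h : u.1 = v.1) :
    u = v := by
  obtain ⟨n, u⟩ := u
  obtain ⟨n', v⟩ := v
  obtain ⟨a, ha⟩ := h1
  obtain ⟨b, hb⟩ := h2
  dsimp at h
  subst h
  congr 1
  funext i
  exact (ha i).symm.trans (hb i)

/-- the truncation of a vertex -/
def anc (v : Vertex m) (k : ℕ) (h : k ≤ v.1) : Vertex m := ⟨k, fun i => v.2 (Fin.castLE h i)⟩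

theorem anc_pre (v : Vertex m) (k : ℕ) (h : k ≤ v.1) : IsPrefix (anc v k h) v :=
  ⟨h, fun _ => rfl⟩

theorem exists_ext (hm : ∀ n, 2 ≤ m n) (v : Vertex m) (k : ℕ) (h : v.1 ≤ k) :
    ∃ w : Vertex m, IsPrefix v w ∧ w.1 = k := by
  refine ⟨⟨k, fun i => if hi : i.1 < v.1 then v.2 ⟨i.1, hi⟩ else ⟨0, by have := hm i; omega⟩⟩,
    ⟨h, fun i => ?_⟩, rfl⟩
  simp

theorem pre_of_pre_le {u v w : Vertex m} (h1 : IsPrefix u w) (h2 : IsPrefix v w)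
    (h : u.1 ≤ v.1) : IsPrefix u v := by
  obtain ⟨a, ha⟩ := h1
  obtain ⟨b, hb⟩ := h2
  refine ⟨h, fun i => ?_⟩
  rw [← ha i, ← hb]
  rfl

instance layer_finite (n : ℕ) : Finite (layer m n) := by
  have : Finite (∀ i : Fin n, Fin (m i)) := inferInstance
  refine Finite.of_surjective
    (fun x : (∀ i : Fin n, Fin (m i)) => (⟨⟨n, x⟩, rfl⟩ : layer m n)) ?_
  rintro ⟨⟨n', x⟩, hx⟩
  have hx' : n' = n := hx
  subst hx'
  exact ⟨x, rfl⟩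

variable {G : Type*} [Group G] [MulAction G (Vertex m)]

theorem level_smul (hG : IsBranchGroup m G) (g : G) (v : Vertex m) : (g • v).1 = v.1 := by
  have key : ∀ n (v : Vertex m), v.1 = n → ∀ g : G, (g • v).1 = n := by
    intro n
    induction n with
    | zero =>
      intro v hv g
      by_contra hne
      have hc : IsChild (anc (g • v) ((g • v).1 - 1) (Nat.sub_le _ _)) (g • v) :=
        ⟨(Nat.succ_pred_eq_of_ne_zero hne).symm, anc_pre _ _ _⟩
      have h2 := (hG.aut g⁻¹ _ _).1 hc
      rw [inv_smul_smul] at h2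
      have := h2.1
      omega
    | succ n ih =>
      intro v hv g
      have hc : IsChild (anc v n (by omega)) v := ⟨hv, anc_pre _ _ _⟩
      have h2 := ((hG.aut g _ _).1 hc).1
      rw [h2, ih _ rfl]
  exact key _ v rfl g

theorem pre_smul (hG : IsBranchGroup m G) (g : G) {u v : Vertex m} (h : IsPrefix u v) :
    IsPrefix (g • u) (g • v) := by
  have key : ∀ n (v : Vertex m), v.1 = n → IsPrefix u v → IsPrefix (g • u) (g • v) := by
    intro n
    induction n with
    | zero =>
      intro v hv h
      have : u = v := pre_eq h (pre_refl v) (by have := h.1; omega)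
      rw [this]; exact pre_refl _
    | succ n ih =>
      intro v hv h
      by_cases hu : u.1 = v.1
      · rw [pre_eq h (pre_refl v) hu]; exact pre_refl _
      · have hc : IsChild (anc v n (by omega)) v := ⟨hv, anc_pre _ _ _⟩
        have h2 := ((hG.aut g _ _).1 hc).2
        refine pre_trans (ih _ rfl (pre_of_pre_le h hc.2 ?_)) h2
        have := h.1
        change u.1 ≤ n
        omega
  exact key _ v rfl h

theorem mem_rist {v : Vertex m} {g : G} :
    g ∈ rist G v ↔ ∀ w, ¬ IsPrefix v w → g • w = w := by
  simp [rist, Subgroup.mem_iInf]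

theorem rist_fix (hG : IsBranchGroup m G) {v : Vertex m} {g : G} (hg : g ∈ rist G v) :
    g • v = v := by
  by_contra hne
  have h1 : ¬ IsPrefix v (g • v) := fun h =>
    hne (pre_eq h (pre_refl _) (level_smul hG g v).symm).symm
  have h2 := mem_rist.1 hg _ h1
  exact hne (smul_left_cancel g h2)

theorem rist_pre (hG : IsBranchGroup m G) {v u : Vertex m} {g : G} (hg : g ∈ rist G v)
    (h : IsPrefix v u) : IsPrefix v (g • u) := by
  have := pre_smul hG g h
  rwa [rist_fix hG hg] at this

/-- an element of `rist v` fixes everything below another vertex of the same level -/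
theorem rist_other {v w u : Vertex m} {g : G} (hg : g ∈ rist G v)
    (hl : v.1 = w.1) (hne : v ≠ w) (h : IsPrefix w u) : g • u = u :=
  mem_rist.1 hg _ fun h' => hne (pre_eq h' h hl)

theorem rist_commute (hG : IsBranchGroup m G) {v w : Vertex m} (hl : v.1 = w.1) (hne : v ≠ w)
    {a b : G} (ha : a ∈ rist G v) (hb : b ∈ rist G w) : Commute a b := by
  have : (b * a)⁻¹ * (a * b) = 1 := by
    apply hG.faithful
    intro u
    rw [mul_smul, inv_smul_eq_iff, mul_smul, mul_smul]
    by_cases h1 : IsPrefix v u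
    · rw [rist_other hb hl.symm hne.symm h1,
        rist_other hb hl.symm hne.symm (rist_pre hG ha h1)]
    · by_cases h2 : IsPrefix w u
      · rw [rist_other ha hl hne h2, rist_other ha hl hne (rist_pre hG hb h2)]
      · rw [mem_rist.1 ha _ h1, mem_rist.1 hb _ h2, mem_rist.1 ha _ h1]
  exact (inv_mul_eq_one.1 this).symm

theorem rist_conj (hG : IsBranchGroup m G) {v : Vertex m} {a : G} (ha : a ∈ rist G v) (k : G) :
    k * a * k⁻¹ ∈ rist G (k • v) := by
  rw [mem_rist]
  intro w hw
  rw [mul_smul, mul_smul, mem_rist.1 ha, smul_inv_smul]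
  intro h
  have := pre_smul hG k h
  rw [smul_inv_smul] at this
  exact hw this

/-- Grigorchuk's commutator trick -/
theorem comm_mem (hG : IsBranchGroup m G) (H L : Subgroup G)
    (hL : ∀ h ∈ H, ∀ k ∈ L, h * k * h⁻¹ ∈ L) {w : Vertex m} {k : G} (hk : k ∈ L)
    (hkw : k • w ≠ w) {a b : G} (ha : a ∈ rist G w) (hb : b ∈ rist G w) (haH : a ∈ H)
    (hbH : b ∈ H) : ⁅a, b⁆ ∈ L := by
  have hc : k * a⁻¹ * k⁻¹ ∈ rist G (k • w) := rist_conj hG (inv_mem ha) k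
  have hcb : Commute (k * a⁻¹ * k⁻¹) b := rist_commute hG (level_smul hG k w) hkw hc hb
  have h1 : a * k * a⁻¹ * k⁻¹ ∈ L := L.mul_mem (hL a haH k hk) (inv_mem hk)
  have h2 : (a * k * a⁻¹ * k⁻¹) * (b * (a * k * a⁻¹ * k⁻¹)⁻¹ * b⁻¹) ∈ L :=
    L.mul_mem h1 (hL b hbH _ (inv_mem h1))
  convert h2 using 1
  set c := k * a⁻¹ * k⁻¹ with hcdef
  have e : a * k * a⁻¹ * k⁻¹ = a * c := by rw [hcdef]; group
  rw [e, commutatorElement_def]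
  have e2 : c * b * c⁻¹ = b := by rw [hcb.eq]; group
  calc a * b * a⁻¹ * b⁻¹ = a * (c * b * c⁻¹) * a⁻¹ * b⁻¹ := by rw [e2]
    _ = _ := by group

/-- `L` acts non-trivially on the subtree at `v` -/
def Act (L : Subgroup G) (v : Vertex m) : Prop :=
  ∃ w, IsPrefix v w ∧ ∃ k ∈ L, k • w ≠ w

theorem act_mono {L L' : Subgroup G} (h : L ≤ L') {v : Vertex m} (hv : Act L v) : Act L' v := by
  obtain ⟨w, hw, k, hk, hkw⟩ := hv
  exact ⟨w, hw, k, h hk, hkw⟩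

theorem act_smul (hG : IsBranchGroup m G) {H L : Subgroup G}
    (hL : ∀ h ∈ H, ∀ k ∈ L, h * k * h⁻¹ ∈ L) {v : Vertex m} (hv : Act L v) {h : G} (hh : h ∈ H) :
    Act L (h • v) := by
  obtain ⟨w, hw, k, hk, hkw⟩ := hv
  refine ⟨h • w, pre_smul hG h hw, h * k * h⁻¹, hL h hh k hk, ?_⟩
  rw [mul_smul, mul_smul, inv_smul_smul]
  exact fun e => hkw (smul_left_cancel h e)

theorem act_up {L : Subgroup G} {u v : Vertex m} (h : IsPrefix u v) (hv : Act L v) : Act L u := by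
  obtain ⟨w, hw, k⟩ := hv
  exact ⟨w, pre_trans h hw, k⟩

/-- if `w` is moved, then all descendants are moved -/
theorem moved_down (hG : IsBranchGroup m G) {w u : Vertex m} (h : IsPrefix w u) {k : G}
    (hk : k • w ≠ w) : k • u ≠ u := by
  intro e
  have := pre_smul hG k h
  rw [e] at this
  exact hk (pre_eq this h (level_smul hG k w))

theorem act_down (hm : ∀ n, 2 ≤ m n) (hG : IsBranchGroup m G) {L : Subgroup G} {v : Vertex m}
    (hv : Act L v) (n : ℕ) (hn : v.1 ≤ n) : ∃ u : Vertex m, IsPrefix v u ∧ u.1 = n ∧ Act L u := by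
  obtain ⟨w, hw, k, hk, hkw⟩ := hv
  by_cases h : w.1 ≤ n
  · obtain ⟨u, hu, hun⟩ := exists_ext hm w n h
    exact ⟨u, pre_trans hw hu, hun, u, pre_refl _, k, hk, moved_down hG hu hkw⟩
  · have h' : n ≤ w.1 := by omega
    exact ⟨anc w n h', pre_of_pre_le hw (anc_pre _ _ _) hn, rfl, w, anc_pre _ _ _, k, hk, hkw⟩

/-- stabilisation of the `H`-orbits on layers -/
theorem orbit_stab (hm : ∀ n, 2 ≤ m n) (hG : IsBranchGroup m G) (H : Subgroup G) [H.Normal]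
    [H.FiniteIndex] : ∃ n₀, ∀ n, n₀ ≤ n → ∀ v u w : Vertex m, v.1 = n₀ → IsPrefix v u →
      IsPrefix v w → u.1 = n → w.1 = n → ∃ h ∈ H, h • u = w := by
  let r : ℕ → Vertex m := fun n => ⟨n, fun i => ⟨0, by have := hm i; omega⟩⟩
  have hr : ∀ a b, a ≤ b → IsPrefix (r a) (r b) := fun a b hab => ⟨hab, fun _ => rfl⟩
  let Q : ℕ → Subgroup (G ⧸ H) := fun n =>
    (MulAction.stabilizer G (r n)).map (QuotientGroup.mk' H)
  have hQ : Antitone Q := by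
    intro a b hab
    apply Subgroup.map_mono
    intro g hg
    rw [MulAction.mem_stabilizer_iff] at hg ⊢
    have := pre_smul hG g (hr a b hab)
    rw [hg] at this
    exact pre_eq this (hr a b hab) (level_smul hG g _)
  obtain ⟨n₀, hn₀⟩ := WellFoundedLT.antitone_chain_condition hQ
  refine ⟨n₀, fun n hn v u w hv hvu hvw hu hw => ?_⟩
  obtain ⟨g, hg⟩ := hG.trans (r n) u hu.symm
  obtain ⟨g', hg'⟩ := hG.trans (r n) w hw.symm
  have h1 : g • r n₀ = v := by
    have := pre_smul hG g (hr n₀ n hn)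
    rw [hg] at this
    exact pre_eq this hvu ((level_smul hG g _).trans hv.symm)
  have h2 : g' • r n₀ = v := by
    have := pre_smul hG g' (hr n₀ n hn)
    rw [hg'] at this
    exact pre_eq this hvw ((level_smul hG g' _).trans hv.symm)
  have h3 : QuotientGroup.mk' H (g'⁻¹ * g) ∈ Q n₀ := by
    refine ⟨g'⁻¹ * g, ?_, rfl⟩
    change (g'⁻¹ * g) • r n₀ = r n₀
    rw [mul_smul, h1, inv_smul_eq_iff, h2]
  rw [hn₀ n hn] at h3
  obtain ⟨s, hs, hse⟩ := h3
  have hs' : s • r n = r n := hs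
  have h4 : s⁻¹ * (g'⁻¹ * g) ∈ H := QuotientGroup.eq.1 hse
  have h5 : g' * s * (s⁻¹ * (g'⁻¹ * g))⁻¹ * (g' * s)⁻¹ ∈ H :=
    Subgroup.Normal.conj_mem inferInstance _ (inv_mem h4) _
  refine ⟨_, h5, ?_⟩
  have e : g' * s * (s⁻¹ * (g'⁻¹ * g))⁻¹ * (g' * s)⁻¹ = g' * s * g⁻¹ := by group
  rw [e, ← hg, mul_smul, inv_smul_smul, mul_smul, hs', hg']

theorem exists_level (hm : ∀ n, 2 ≤ m n) (hG : IsBranchGroup m G) (H : Subgroup G) [H.Normal]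
    [H.FiniteIndex] (L : Subgroup G) (hL : ∀ h ∈ H, ∀ k ∈ L, h * k * h⁻¹ ∈ L) :
    ∃ n, ∀ u : Vertex m, u.1 = n → Act L u → ∃ k ∈ L, k • u ≠ u := by
  obtain ⟨n₀, h₀⟩ := orbit_stab hm hG H
  have h1 : ∀ v : layer m n₀, ∃ N, Act L v.1 → ∃ w, IsPrefix v.1 w ∧ w.1 = N ∧
      ∃ k ∈ L, k • w ≠ w := by
    intro v
    by_cases hv : Act L v.1
    · obtain ⟨w, hw, hk⟩ := hv
      exact ⟨w.1, fun _ => ⟨w, hw, rfl, hk⟩⟩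
    · exact ⟨0, fun h => absurd h hv⟩
  choose N hN using h1
  obtain ⟨B, hB⟩ := (Set.finite_range N).bddAbove
  refine ⟨max B n₀, fun u hu hau => ?_⟩
  have hle : n₀ ≤ u.1 := hu ▸ le_max_right _ _
  have hva : Act L (anc u n₀ hle) := act_up (anc_pre _ _ _) hau
  obtain ⟨w, hw, hwN, k, hk, hkw⟩ := hN ⟨anc u n₀ hle, rfl⟩ hva
  have : w.1 ≤ max B n₀ := by
    rw [hwN]; exact (hB (Set.mem_range_self _)).trans (le_max_left _ _)
  obtain ⟨x, hx, hxn⟩ := exists_ext hm w _ this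
  obtain ⟨h, hh, he⟩ := h₀ (max B n₀) (le_max_right _ _) (anc u n₀ hle) x u rfl
    (pre_trans hw hx) (anc_pre _ _ _) hxn hu
  refine ⟨h * k * h⁻¹, hL h hh k hk, ?_⟩
  rw [← he, mul_smul, mul_smul, inv_smul_smul]
  exact fun e => moved_down hG hx hkw (smul_left_cancel h e)

theorem exists_phi {Γ ι : Type*} [Group Γ] [Finite ι] (R : ι → Subgroup Γ)
    (hcomm : Pairwise fun i j : ι => ∀ x y : Γ, x ∈ R i → y ∈ R j → Commute x y) :
    ∃ φ : (∀ i, R i) →* Γ,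
      (∀ (d : ∀ i, R i) (X : Subgroup Γ), (∀ i, (d i : Γ) ∈ X) → φ d ∈ X) ∧
      (∀ i (y : R i), ∀ d : (∀ i, R i), d i = y → (∀ j, j ≠ i → d j = 1) →
        φ d = y) ∧ φ.range = ⨆ i, R i := by
  classical
  have : Fintype ι := Fintype.ofFinite _
  refine ⟨Subgroup.noncommPiCoprod hcomm, ?_, ?_, ?_⟩
  · intro d X hX
    have := MonoidHom.noncommPiCoprod_apply (fun i : ι => (R i).subtype)
      (hcomm := Subgroup.commute_subtype_of_commute hcomm) d
    unfold Subgroup.noncommPiCoprod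
    rw [this]
    exact Subgroup.noncommProd_mem _ _ fun i _ => hX i
  · intro i y d h1 h2
    have : d = Pi.mulSingle i y := by
      funext j
      by_cases hj : j = i
      · subst hj
        rw [h1, Pi.mulSingle_eq_same]
      · rw [h2 j hj, Pi.mulSingle_eq_of_ne hj]
    rw [this]
    exact Subgroup.noncommPiCoprod_mulSingle i y
  · rw [Subgroup.noncommPiCoprod_range]

theorem exists_D {Γ ι : Type*} [Group Γ] [Finite ι] (R : ι → Subgroup Γ)
    (H : Subgroup Γ) [H.Normal] [H.FiniteIndex] :
    ∃ D : Subgroup (∀ i, R i), D.FiniteIndex ∧ ∀ d ∈ D, ∀ i, (d i : Γ) ∈ H := by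
  let ψ : (∀ i, R i) →* (ι → Γ ⧸ H) :=
    { toFun := fun d i => QuotientGroup.mk' H (d i)
      map_one' := by ext i; simp
      map_mul' := by intro a b; ext i; simp }
  refine ⟨ψ.ker, inferInstance, ?_⟩
  intro d hd i
  have : ψ d i = 1 := by rw [MonoidHom.mem_ker.1 hd]; rfl
  exact (QuotientGroup.eq_one_iff _).1 this

/-- Product decomposition with factors in a finite index normal subgroup, in generic form. -/
theorem generic_decomp {Γ ι : Type*} [Group Γ] [Finite ι] (R : ι → Subgroup Γ)
    (hcomm : Pairwise fun i j : ι => ∀ x y : Γ, x ∈ R i → y ∈ R j → Commute x y)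
    (hfin : (⨆ i, R i).FiniteIndex) (H : Subgroup Γ) [H.Normal] [H.FiniteIndex] :
    ∃ S : Subgroup Γ, S.FiniteIndex ∧ ∀ x ∈ S, ∃ c : ι → Γ, (∀ i, c i ∈ R i) ∧ (∀ i, c i ∈ H) ∧
      (∀ i, ∀ X : Subgroup Γ, (∀ j, j ≠ i → c j ∈ X) → x * (c i)⁻¹ ∈ X) ∧
      ∀ y ∈ S, ∃ e : ι → Γ, (∀ i, e i ∈ R i) ∧ (∀ i, e i ∈ H) ∧
      ∀ X : Subgroup Γ, (∀ i, ⁅c i, e i⁆ ∈ X) → ⁅x, y⁆ ∈ X := by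
  classical
  obtain ⟨φ, hφmem, hφs, hφrange⟩ := exists_phi R hcomm
  obtain ⟨D, hDf, hψm⟩ := exists_D R H
  refine ⟨D.map φ, ?_, ?_⟩
  · rw [← hφrange] at hfin
    have h2 : (D ⊔ φ.ker).FiniteIndex := Subgroup.finiteIndex_of_le le_sup_left
    refine ⟨?_⟩
    rw [Subgroup.index_map]
    exact mul_ne_zero h2.index_ne_zero hfin.index_ne_zero
  · rintro _ ⟨d, hd, rfl⟩
    refine ⟨fun i => d i, fun i => (d i).2, fun i => hψm d hd i, ?_, ?_⟩
    · intro i X hX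
      have h3 : φ (Pi.mulSingle i (d i)⁻¹) = ((d i)⁻¹ : R i) :=
        hφs i _ _ (Pi.mulSingle_eq_same i _) fun j hj => Pi.mulSingle_eq_of_ne hj _
      have h2 : φ (d * Pi.mulSingle i (d i)⁻¹) ∈ X := by
        apply hφmem
        intro j
        by_cases hj : j = i
        · subst hj
          have : (d * Pi.mulSingle j (d j)⁻¹ : ∀ i, R i) j = 1 := by
            rw [Pi.mul_apply, Pi.mulSingle_eq_same, mul_inv_cancel]
          rw [this]
          exact one_mem _
        · have : (d * Pi.mulSingle i (d i)⁻¹ : ∀ i, R i) j = d j := by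
            rw [Pi.mul_apply, Pi.mulSingle_eq_of_ne hj, mul_one]
          rw [this]
          exact hX j hj
      rw [map_mul, h3] at h2
      exact h2
    · rintro _ ⟨e, he, rfl⟩
      refine ⟨fun i => e i, fun i => (e i).2, fun i => hψm e he i, ?_⟩
      intro X hX
      rw [← map_commutatorElement]
      exact hφmem _ _ fun i => hX i

/-- Key lemma: a finite index subgroup of `G` whose intersection with `L'` has derived
group in `L`. -/
theorem exists_finiteIndex (hm : ∀ n, 2 ≤ m n) (hG : IsBranchGroup m G) (H : Subgroup G)
    [H.Normal] [H.FiniteIndex] (L L' : Subgroup G) (hL : ∀ h ∈ H, ∀ k ∈ L, h * k * h⁻¹ ∈ L)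
    (hact : ∀ v : Vertex m, Act L' v → Act L v) :
    ∃ S : Subgroup G, S.FiniteIndex ∧ ∀ x ∈ S, ∀ y ∈ S, x ∈ L' → y ∈ L' → ⁅x, y⁆ ∈ L := by
  obtain ⟨n, hn⟩ := exists_level hm hG H L hL
  have hcomm : Pairwise fun i j : layer m n =>
      ∀ x y : G, x ∈ rist G i.1 → y ∈ rist G j.1 → Commute x y := by
    intro i j hij x y hx hy
    exact rist_commute hG (i.2.trans j.2.symm) (fun h => hij (Subtype.ext h)) hx hy
  have hfin : (⨆ i : layer m n, rist G i.1).FiniteIndex := by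
    have := hG.ristFiniteIndex n
    rw [ristLayer, ristSet, ← iSup_subtype''] at this
    exact this
  obtain ⟨S, hS, hdec⟩ := generic_decomp (fun i : layer m n => rist G i.1) hcomm hfin H
  refine ⟨S, hS, fun x hx y hy hxL _ => ?_⟩
  obtain ⟨c, hcR, hcH, hcx, hcy⟩ := hdec x hx
  obtain ⟨e, heR, heH, hxy⟩ := hcy y hy
  apply hxy
  intro i
  by_cases hi : Act L i.1
  · obtain ⟨k, hk, hki⟩ := hn i.1 i.2 hi
    exact comm_mem hG H L hL hk hki (hcR i) (heR i) (hcH i) (heH i)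
  · have hi' : ¬ Act L' i.1 := fun h => hi (hact _ h)
    have h1 : c i = 1 := by
      apply hG.faithful
      intro t
      by_cases ht : IsPrefix i.1 t
      · have h1 : x • t = t := by
          by_contra hne
          exact hi' ⟨t, ht, _, hxL, hne⟩
        have h2 := hcx i (MulAction.stabilizer G (c i • t)) fun j hj =>
          rist_other (hcR j) (j.2.trans i.2.symm) (fun h => hj (Subtype.ext h))
            (rist_pre hG (hcR i) ht)
        rw [MulAction.mem_stabilizer_iff, mul_smul, inv_smul_smul, h1] at h2
        exact h2.symm
      · exact mem_rist.1 (hcR i) _ ht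
    rw [h1, commutatorElement_one_left]
    exact one_mem _

theorem factor_vs (hm : ∀ n, 2 ≤ m n) (hG : IsBranchGroup m G) (H : Subgroup G)
    [H.Normal] [H.FiniteIndex] (K K' : Subgroup H) (hK : K.Normal)
    (hact : ∀ v : Vertex m, Act (K'.map H.subtype) v → Act (K.map H.subtype) v)
    (hL : ∀ h ∈ H, ∀ k ∈ K.map H.subtype, h * k * h⁻¹ ∈ K.map H.subtype) :
    FactorVirtuallySolvable K K' := by
  obtain ⟨S, hS, hSc⟩ := exists_finiteIndex hm hG H _ _ hL hact
  have hn : (K.subgroupOf K').Normal := inferInstance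
  refine ⟨hn, ?_⟩
  let S' : Subgroup K' := (S.subgroupOf H).subgroupOf K'
  have hS' : S'.FiniteIndex := inferInstance
  refine ⟨S'.map (QuotientGroup.mk' _), ?_, ?_⟩
  · refine ⟨?_⟩
    intro h0
    have := Subgroup.index_map_dvd S' (QuotientGroup.mk'_surjective (K.subgroupOf K'))
    rw [h0, zero_dvd_iff] at this
    exact hS'.index_ne_zero this
  · apply isSolvable_of_comm
    rintro ⟨_, x, hx, rfl⟩ ⟨_, y, hy, rfl⟩
    apply Subtype.ext
    have h1 := hSc _ hx _ hy ⟨x, x.2, rfl⟩ ⟨y, y.2, rfl⟩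
    obtain ⟨z, hz, hze⟩ := h1
    have h2 : ⁅x, y⁆ ∈ K.subgroupOf K' := by
      rw [Subgroup.mem_subgroupOf]
      have : ((⁅x, y⁆ : K') : H) = z := by
        apply Subtype.ext
        rw [← H.subtype_apply z, hze]
        rfl
      rw [this]
      exact hz
    have h3 := (QuotientGroup.eq_one_iff (N := K.subgroupOf K') _).2 h2
    change QuotientGroup.mk' (K.subgroupOf K') ⁅x, y⁆ = 1 at h3
    rw [map_commutatorElement, commutatorElement_eq_one_iff_mul_comm] at h3
    exact h3

end BranchChain

/-- **Lemma.** Let `G` be a branch group on `T` and `H ⊴ G` of finite index.  Then in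
any ascending chain of normal subgroups of `H` there are at most `2^{|G:H|-1}` factors
that are not virtually soluble. -/
theorem chain_few_nonvirtuallysolvable_factors
    (m : ℕ → ℕ) (hm : ∀ n, 2 ≤ m n)
    (G : Type*) [Group G] [MulAction G (Vertex m)] (hG : IsBranchGroup m G)
    (H : Subgroup G) [H.Normal] [H.FiniteIndex]
    (K : ℕ → Subgroup ↥H) (hnorm : ∀ i, (K i).Normal) (hmono : ∀ i, K i ≤ K (i + 1)) :
    ∀ s : Finset ℕ, (∀ i ∈ s, ¬ FactorVirtuallySolvable (K i) (K (i + 1))) →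
      s.card ≤ 2 ^ (H.index - 1) := by
  classical
  intro s hs
  set L : ℕ → Subgroup G := fun i => (K i).map H.subtype with hLdef
  have hL : ∀ i, ∀ h ∈ H, ∀ k ∈ L i, h * k * h⁻¹ ∈ L i := by
    rintro i h hh _ ⟨k, hk, rfl⟩
    exact ⟨⟨h, hh⟩ * k * ⟨h, hh⟩⁻¹, (hnorm i).conj_mem k hk _, rfl⟩
  have hLm : Monotone L := fun i j hij =>
    Subgroup.map_mono (monotone_nat_of_le_succ hmono hij)
  have h1 : ∀ i : s, ∃ v : Vertex m, BranchChain.Act (L (i + 1)) v ∧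
      ¬ BranchChain.Act (L i) v := by
    intro i
    by_contra hcon
    push Not at hcon
    exact hs i i.2 (BranchChain.factor_vs hm hG H _ _ (hnorm i) hcon (hL i))
  choose v hv hv' using h1
  obtain ⟨n, hn⟩ := (Set.finite_range fun i => (v i).1).bddAbove
  have h2 : ∀ i : s, ∃ u : Vertex m, u.1 = n ∧ BranchChain.Act (L (i + 1)) u ∧
      ¬ BranchChain.Act (L i) u := by
    intro i
    obtain ⟨u, hu, hun, hua⟩ := BranchChain.act_down hm hG (hv i) n (hn (Set.mem_range_self i))
    exact ⟨u, hun, hua, fun h => hv' i (BranchChain.act_up hu h)⟩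
  choose u hun hu hu' using h2
  let r : Vertex m := ⟨n, fun i => ⟨0, by have := hm i; omega⟩⟩
  have h3 : ∀ i : s, ∃ g : G, g • r = u i := fun i => hG.trans r (u i) (hun i).symm
  choose g hg using h3
  have key : ∀ i j : s, (i : ℕ) < j → (g i : G ⧸ H) ≠ g j := by
    intro i j hij he
    have h4 : (g i)⁻¹ * g j ∈ H := QuotientGroup.eq.1 he
    have h5 : g i * ((g i)⁻¹ * g j) * (g i)⁻¹ ∈ H :=
      Subgroup.Normal.conj_mem inferInstance _ h4 _
    have h6 := BranchChain.act_smul hG (hL _)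
      (BranchChain.act_mono (hLm (show (i : ℕ) + 1 ≤ j from hij)) (hu i)) h5
    have e : g i * ((g i)⁻¹ * g j) * (g i)⁻¹ = g j * (g i)⁻¹ := by group
    rw [e, ← hg i, mul_smul, inv_smul_smul, hg j] at h6
    exact hu' j h6
  have hinj : Function.Injective fun i : s => (g i : G ⧸ H) := by
    intro i j he
    rcases lt_trichotomy (i : ℕ) j with h | h | h
    · exact absurd he (key i j h)
    · exact Subtype.ext h
    · exact absurd he.symm (key j i h)
  have h7 : s.card ≤ H.index := by
    have := Nat.card_le_card_of_injective _ hinj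
    rw [Nat.card_eq_fintype_card, Fintype.card_coe] at this
    exact this
  have h8 := Nat.lt_two_pow_self (n := H.index - 1)
  omega
end

section
/- Let G be a branch group acting on a rooted tree T, let H be a subgroup of finite index in G and let K be a normal subgroup of H. If K ∩ rist_G(v) is non-trivial for every vertex v of T, then rist_G(n)' ≤ K for some n. -/
/-!  Common definitions: rooted trees of type `(m n)`, tree automorphisms,
rigid stabilizers, branch groups, and auxiliary notions. -/

universe u

open scoped commutatorElement

section Helpers

variable {m : ℕ → ℕ}

theorem BG.prefix_refl (v : Vertex m) : Vertex.IsPrefix v v :=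
  ⟨le_refl _, fun _ => rfl⟩

theorem BG.prefix_trans {u v w : Vertex m} (h1 : Vertex.IsPrefix u v)
    (h2 : Vertex.IsPrefix v w) : Vertex.IsPrefix u w := by
  obtain ⟨a, ha⟩ := h1
  obtain ⟨b, hb⟩ := h2
  exact ⟨a.trans b, fun i => (hb (Fin.castLE a i)).trans (ha i)⟩

/-- Truncation. -/
def BG.trunc (w : Vertex m) (n : ℕ) (h : n ≤ w.1) : Vertex m :=
  ⟨n, fun i => w.2 (Fin.castLE h i)⟩

theorem BG.trunc_prefix (w : Vertex m) (n : ℕ) (h : n ≤ w.1) :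
    Vertex.IsPrefix (BG.trunc w n h) w := ⟨h, fun _ => rfl⟩

theorem BG.prefix_eq_trunc {v w : Vertex m} (h : Vertex.IsPrefix v w) :
    v = BG.trunc w v.1 h.1 := by
  obtain ⟨n, x⟩ := v
  obtain ⟨a, ha⟩ := h
  unfold BG.trunc
  congr 1
  funext i
  exact (ha i).symm

theorem BG.prefix_unique {v v' w : Vertex m} (hl : v.1 = v'.1) (h : Vertex.IsPrefix v w)
    (h' : Vertex.IsPrefix v' w) : v = v' := by
  rw [BG.prefix_eq_trunc h, BG.prefix_eq_trunc h']
  congr 1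

theorem BG.exists_ext (hm : ∀ n, 2 ≤ m n) (v : Vertex m) (n : ℕ) (h : v.1 ≤ n) :
    ∃ w : Vertex m, w.1 = n ∧ Vertex.IsPrefix v w := by
  refine ⟨⟨n, fun i => if hi : i.1 < v.1 then v.2 ⟨i.1, hi⟩ else
    ⟨0, lt_of_lt_of_le two_pos (hm _)⟩⟩, rfl, h, ?_⟩
  intro i
  simp

variable {G : Type*} [Group G] [MulAction G (Vertex m)]

theorem BG.mem_rist {v : Vertex m} {g : G} :
    g ∈ rist G v ↔ ∀ w, ¬ Vertex.IsPrefix v w → g • w = w := by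
  simp [rist, Subgroup.mem_iInf, MulAction.mem_stabilizer_iff]

theorem BG.rist_anti {v w : Vertex m} (h : Vertex.IsPrefix v w) : rist G w ≤ rist G v := by
  intro g hg
  rw [BG.mem_rist] at *
  exact fun u hu => hg u fun hw => hu (BG.prefix_trans h hw)

theorem BG.level_smul (hG : IsBranchGroup m G) (n : ℕ) :
    ∀ (g : G) (v : Vertex m), v.1 = n → (g • v).1 = n := by
  induction n with
  | zero =>
    intro g v hv
    by_contra hne
    obtain ⟨k, hk⟩ := Nat.exists_eq_succ_of_ne_zero hne
    have hc : Vertex.IsChild (BG.trunc (g • v) k (by omega)) (g • v) :=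
      ⟨hk, BG.trunc_prefix _ _ _⟩
    have := (hG.aut g⁻¹ _ _).1 hc
    rw [inv_smul_smul] at this
    have := this.1
    omega
  | succ k ih =>
    intro g v hv
    have hc : Vertex.IsChild (BG.trunc v k (by omega)) v := ⟨hv, BG.trunc_prefix _ _ _⟩
    have := ((hG.aut g _ _).1 hc).1
    rw [this, ih g _ rfl]

theorem BG.level (hG : IsBranchGroup m G) (g : G) (v : Vertex m) : (g • v).1 = v.1 :=
  BG.level_smul hG _ g v rfl

theorem BG.prefix_smul (hG : IsBranchGroup m G) (g : G) (d : ℕ) :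
    ∀ v w : Vertex m, w.1 = v.1 + d → Vertex.IsPrefix v w →
      Vertex.IsPrefix (g • v) (g • w) := by
  induction d with
  | zero =>
    intro v w hl h
    rw [BG.prefix_unique hl.symm h (BG.prefix_refl w)]
    exact BG.prefix_refl _
  | succ d ih =>
    intro v w hl h
    have hc : Vertex.IsChild (BG.trunc w (v.1 + d) (by omega)) w :=
      ⟨hl, BG.trunc_prefix _ _ _⟩
    refine BG.prefix_trans (ih v (BG.trunc w (v.1 + d) (by omega)) rfl ?_)
      ((hG.aut g _ _).1 hc).2
    exact ⟨Nat.le_add_right _ _, fun i => h.2 i⟩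

theorem BG.prefix_smul' (hG : IsBranchGroup m G) (g : G) {v w : Vertex m}
    (h : Vertex.IsPrefix v w) : Vertex.IsPrefix (g • v) (g • w) := by
  obtain ⟨d, hd⟩ := Nat.exists_eq_add_of_le h.1
  exact BG.prefix_smul hG g d v w hd h

theorem BG.rist_conj (hG : IsBranchGroup m G) (g : G) (v : Vertex m) (x : G)
    (hx : x ∈ rist G v) : g * x * g⁻¹ ∈ rist G (g • v) := by
  rw [BG.mem_rist] at *
  intro w hw
  have : ¬ Vertex.IsPrefix v (g⁻¹ • w) := fun h => hw (by
    simpa using BG.prefix_smul' hG g h)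
  rw [mul_smul, mul_smul, hx _ this, smul_inv_smul]

theorem BG.rist_comm (hG : IsBranchGroup m G) {v w : Vertex m} (hl : v.1 = w.1) (hne : v ≠ w)
    {a b : G} (ha : a ∈ rist G v) (hb : b ∈ rist G w) : a * b = b * a := by
  have hdis : ∀ u, Vertex.IsPrefix v u → ¬ Vertex.IsPrefix w u :=
    fun u h h' => hne (BG.prefix_unique hl h h')
  have key : ∀ (v : Vertex m) (a : G), a ∈ rist G v → ∀ u, Vertex.IsPrefix v u →
      Vertex.IsPrefix v (a • u) := by
    intro v a ha u hu
    by_contra hn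
    have h1 := BG.mem_rist.1 ha _ hn
    rw [smul_left_cancel a h1] at hn
    exact hn hu
  have key2 : ∀ u : Vertex m, (a * b) • u = (b * a) • u := by
    intro u
    rw [mul_smul, mul_smul]
    by_cases hv : Vertex.IsPrefix v u
    · rw [BG.mem_rist.1 hb _ (hdis _ hv), BG.mem_rist.1 hb _ (hdis _ (key v a ha u hv))]
    · rw [BG.mem_rist.1 ha _ hv]
      by_cases hw : Vertex.IsPrefix w u
      · exact BG.mem_rist.1 ha _ fun h => hdis _ h (key w b hb u hw)
      · rw [BG.mem_rist.1 hb _ hw, BG.mem_rist.1 ha _ hv]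
  have := hG.faithful ((b * a)⁻¹ * (a * b)) fun u => by
    rw [mul_smul, key2 u, inv_smul_smul]
  exact (inv_mul_eq_one.1 this).symm

/-- Stabilisation modulo a normal subgroup of finite index. -/
theorem BG.stabilise (hm : ∀ n, 2 ≤ m n) (hG : IsBranchGroup m G) (C : Subgroup G) [C.Normal]
    [C.FiniteIndex] (S : Vertex m → Subgroup G)
    (hanti : ∀ v w, Vertex.IsPrefix v w → S w ≤ S v)
    (hconj : ∀ (g : G) v x, x ∈ S v → g * x * g⁻¹ ∈ S (g • v)) :
    ∃ N, ∀ v w, N ≤ v.1 → Vertex.IsPrefix v w → ∀ x ∈ S v, ∃ y ∈ S w, y⁻¹ * x ∈ C := by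
  classical
  let F : Vertex m → Subgroup (G ⧸ C) := fun v => (S v).map (QuotientGroup.mk' C)
  have hF : ∀ v w, Vertex.IsPrefix v w → F w ≤ F v :=
    fun v w h => Subgroup.map_mono (hanti v w h)
  have hcard : ∀ v w : Vertex m, v.1 = w.1 → Nat.card (F v) ≤ Nat.card (F w) := by
    intro v w h
    obtain ⟨g, rfl⟩ := hG.trans v w h
    refine Nat.card_le_card_of_injective
      (fun x : F v => (⟨(g : G ⧸ C) * x * (g : G ⧸ C)⁻¹, ?_⟩ : F (g • v))) ?_
    · obtain ⟨y, hy, hxy⟩ := x.2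
      exact ⟨g * y * g⁻¹, hconj g v y hy, by rw [← hxy]; simp⟩
    · intro x y hxy
      simpa using hxy
  obtain ⟨v0, hv0⟩ : ∃ v0, ∀ v, Nat.card (F v0) ≤ Nat.card (F v) := by
    have : (Set.range fun v => Nat.card (F v)).Nonempty := ⟨_, ⟨0, fun i => i.elim0⟩, rfl⟩
    obtain ⟨v0, h0⟩ := Nat.sInf_mem this
    exact ⟨v0, fun v => h0.le.trans (Nat.sInf_le ⟨v, rfl⟩)⟩
  refine ⟨v0.1, fun v w hv hvw x hx => ?_⟩
  have h1 : Nat.card (F v) ≤ Nat.card (F w) :=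
    calc Nat.card (F v) ≤ Nat.card (F (BG.trunc v v0.1 hv)) :=
          Subgroup.card_le_of_le (hF _ _ (BG.trunc_prefix _ _ _))
      _ ≤ Nat.card (F v0) := hcard _ _ rfl
      _ ≤ _ := hv0 w
  have h2 : F w = F v := Subgroup.eq_of_le_of_card_ge (hF _ _ hvw) h1
  have h3 : (QuotientGroup.mk' C x) ∈ F w := h2 ▸ ⟨x, hx, rfl⟩
  obtain ⟨y, hy, hyx⟩ := h3
  exact ⟨y, hy, QuotientGroup.eq.1 hyx⟩

/-- The local commutator trick. -/
theorem BG.local_comm (hG : IsBranchGroup m G) (H K : Subgroup G)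
    (hKn : ∀ h ∈ H, ∀ k ∈ K, h * k * h⁻¹ ∈ K) (v : Vertex m) (k : G) (hk : k ∈ K)
    (hkv : k • v ≠ v) (a b : G) (ha : a ∈ rist G v) (hb : b ∈ rist G v) (haH : a ∈ H)
    (hbH : b ∈ H) : ⁅a, b⁆ ∈ K := by
  have hc := BG.rist_conj hG k v a ha
  set c := k * a * k⁻¹ with hcdef
  have cb : c * b = b * c := BG.rist_comm hG (BG.level hG k v) hkv hc hb
  have ca : c * a = a * c := BG.rist_comm hG (BG.level hG k v) hkv hc ha
  -- `x = a c⁻¹` lies in `K`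
  have hx : a * c⁻¹ ∈ K := by
    have h1 := K.mul_mem hk (hKn a haH k⁻¹ (K.inv_mem hk))
    have h2 : k * (a * k⁻¹ * a⁻¹) = c * a⁻¹ := by rw [hcdef]; group
    rw [h2] at h1
    simpa using K.inv_mem h1
  have hy := K.mul_mem hx (hKn b hbH _ (K.inv_mem hx))
  have e : a * c⁻¹ * (b * (a * c⁻¹)⁻¹ * b⁻¹) = ⁅a, b⁆ := by
    have cb' : c⁻¹ * b = b * c⁻¹ := (Commute.inv_left (show Commute c b from cb))
    calc a * c⁻¹ * (b * (a * c⁻¹)⁻¹ * b⁻¹) = a * (c⁻¹ * b) * c * a⁻¹ * b⁻¹ := by group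
      _ = ⁅a, b⁆ := by rw [cb', commutatorElement_def]; group
  rwa [e] at hy

theorem BG.assemble (hG : IsBranchGroup m G) (K : Subgroup G) (n : ℕ)
    (h : ∀ v : Vertex m, v.1 = n → ∀ a ∈ rist G v, ∀ b ∈ rist G v, ⁅a, b⁆ ∈ K) :
    ⁅ristLayer m G n, ristLayer m G n⁆ ≤ K := by
  let S : Set G := {g | ∃ v : Vertex m, v.1 = n ∧ ∃ a ∈ rist G v, ∃ b ∈ rist G v, ⁅a, b⁆ = g}
  have hMK : Subgroup.normalClosure S ≤ K := by
    refine (Subgroup.closure_le _).2 ?_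
    intro x hx
    obtain ⟨y, ⟨v, hv, a, ha, b, hb, rfl⟩, hc⟩ := Group.mem_conjugatesOfSet_iff.1 hx
    obtain ⟨g, rfl⟩ := isConj_iff.1 hc
    have := h (g • v) ((BG.level hG g v).trans hv) _ (BG.rist_conj hG g v a ha) _
      (BG.rist_conj hG g v b hb)
    have e : g * ⁅a, b⁆ * g⁻¹ = ⁅g * a * g⁻¹, g * b * g⁻¹⁆ := by
      simp only [commutatorElement_def]; group
    rw [e]
    exact this
  refine le_trans ?_ hMK
  set M := Subgroup.normalClosure S
  let π := QuotientGroup.mk' M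
  have hgen : ∀ v w : Vertex m, v.1 = n → w.1 = n → ∀ a ∈ rist G v, ∀ b ∈ rist G w,
      π a * π b = π b * π a := by
    intro v w hv hw a ha b hb
    by_cases hvw : v = w
    · subst hvw
      have : ⁅a, b⁆ ∈ M := Subgroup.subset_normalClosure ⟨v, hv, a, ha, b, hb, rfl⟩
      have h1 : π ⁅a, b⁆ = 1 := (QuotientGroup.eq_one_iff _).2 this
      rw [map_commutatorElement, commutatorElement_eq_one_iff_mul_comm] at h1
      exact h1
    · rw [← map_mul, ← map_mul, BG.rist_comm hG (hv.trans hw.symm) hvw ha hb]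
  have step1 : ∀ v : Vertex m, v.1 = n → ∀ a ∈ rist G v, ∀ y ∈ ristLayer m G n,
      π y * π a = π a * π y := by
    intro v hv a ha
    have : ristLayer m G n ≤ (Subgroup.centralizer {π a}).comap π := by
      refine iSup₂_le fun w hw b hb => ?_
      rw [Subgroup.mem_comap, Subgroup.mem_centralizer_singleton_iff]
      exact hgen w v hw hv b hb a ha
    intro y hy
    have := this hy
    rwa [Subgroup.mem_comap, Subgroup.mem_centralizer_singleton_iff] at this
  rw [Subgroup.commutator_le]
  intro x hx y hy
  have : ristLayer m G n ≤ (Subgroup.centralizer {π y}).comap π := by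
    refine iSup₂_le fun w hw b hb => ?_
    rw [Subgroup.mem_comap, Subgroup.mem_centralizer_singleton_iff]
    exact (step1 w hw b hb y hy).symm
  have h1 := this hx
  rw [Subgroup.mem_comap, Subgroup.mem_centralizer_singleton_iff] at h1
  have h2 : π ⁅x, y⁆ = 1 := by
    rw [map_commutatorElement, commutatorElement_eq_one_iff_mul_comm]
    exact h1
  exact (QuotientGroup.eq_one_iff _).1 h2

/-- Deep enough, every vertex is moved by `K`. -/
theorem BG.moved (hm : ∀ n, 2 ≤ m n) (hG : IsBranchGroup m G) (H K : Subgroup G)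
    [H.FiniteIndex] (hKn : ∀ h ∈ H, ∀ k ∈ K, h * k * h⁻¹ ∈ K)
    (hmeet : ∀ v : Vertex m, K ⊓ rist G v ≠ ⊥) :
    ∃ n, ∀ v : Vertex m, n ≤ v.1 → ∃ k ∈ K, k • v ≠ v := by
  classical
  obtain ⟨N, hN⟩ := BG.stabilise hm hG H.normalCore
    (fun v : Vertex m => MulAction.stabilizer G v)
    (by
      intro v w h g hg
      rw [MulAction.mem_stabilizer_iff] at *
      have := BG.prefix_smul' hG g h
      rw [hg] at this
      exact BG.prefix_unique (BG.level hG g v) this h)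
    (by
      intro g v x hx
      rw [MulAction.mem_stabilizer_iff] at *
      rw [mul_smul, mul_smul, inv_smul_smul, hx])
  have hdown : ∀ (k : G) (v w : Vertex m), Vertex.IsPrefix v w → k • v ≠ v → k • w ≠ w := by
    intro k v w h hk hw
    have := BG.prefix_smul' hG k h
    rw [hw] at this
    exact hk (BG.prefix_unique (BG.level hG k v) this h)
  have hex : ∀ v : Vertex m, ∃ u, Vertex.IsPrefix v u ∧ ∃ k ∈ K, k • u ≠ u := by
    intro v
    obtain ⟨k, hk, hk1⟩ := (Subgroup.bot_or_exists_ne_one (K ⊓ rist G v)).resolve_left (hmeet v)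
    by_contra hcon
    push Not at hcon
    refine hk1 (hG.faithful k fun u => ?_)
    by_cases hu : Vertex.IsPrefix v u
    · exact hcon u hu k hk.1
    · exact BG.mem_rist.1 hk.2 u hu
  choose U hU hU' using hex
  let n := max N (Finset.univ.sup fun x : (∀ i : Fin N, Fin (m i)) => (U ⟨N, x⟩).1)
  refine ⟨n, fun w hw => ?_⟩
  have hNw : N ≤ w.1 := (le_max_left _ _).trans hw
  let v := BG.trunc w N hNw
  obtain ⟨k, hk, hku⟩ := hU' v
  have hle : (U v).1 ≤ w.1 := by
    refine le_trans ?_ ((le_max_right _ _).trans hw)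
    exact Finset.le_sup (f := fun x : (∀ i : Fin N, Fin (m i)) => (U ⟨N, x⟩).1)
      (Finset.mem_univ v.2)
  obtain ⟨u, hul, hu⟩ := BG.exists_ext hm (U v) w.1 hle
  have hku' := hdown k _ _ hu hku
  have hvu : Vertex.IsPrefix v u := BG.prefix_trans (hU v) hu
  have hvw : Vertex.IsPrefix v w := BG.trunc_prefix _ _ _
  obtain ⟨g, rfl⟩ := hG.trans w u hul.symm
  have hgv : g ∈ MulAction.stabilizer G v := by
    rw [MulAction.mem_stabilizer_iff]
    exact BG.prefix_unique (BG.level hG g v) (BG.prefix_smul' hG g hvw) hvu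
  obtain ⟨y, hy, hyC⟩ := hN v w (le_refl _) hvw g hgv
  -- rewrite `g = h * y` with `h` in the core
  have hh : g * y⁻¹ ∈ H := by
    have := H.normalCore_normal.conj_mem _ hyC y
    have e : y * (y⁻¹ * g) * y⁻¹ = g * y⁻¹ := by group
    rw [e] at this
    exact H.normalCore_le this
  rw [MulAction.mem_stabilizer_iff] at hy
  have hgw : g • w = (g * y⁻¹) • w := by
    rw [mul_smul, ← hy, inv_smul_smul, hy]
  set h := g * y⁻¹
  refine ⟨h⁻¹ * k * h, ?_, ?_⟩
  · simpa using hKn h⁻¹ (H.inv_mem hh) k hk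
  · intro e
    apply hku'
    rw [hgw]
    rw [mul_smul, mul_smul, inv_smul_eq_iff] at e
    exact e

theorem BG.siblings (hm : ∀ n, 2 ≤ m n) (n : ℕ) (w : Vertex m) (hw : w.1 = n + 2) :
    ∃ v w2 w3 : Vertex m, v.1 = n ∧ w2.1 = w.1 ∧ w3.1 = w.1 ∧ Vertex.IsPrefix v w ∧
      Vertex.IsPrefix v w2 ∧ Vertex.IsPrefix v w3 ∧ w ≠ w2 ∧ w ≠ w3 ∧ w2 ≠ w3 := by
  classical
  obtain ⟨l, x⟩ := w
  change l = n + 2 at hw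
  subst hw
  have hne : ∀ i : Fin (n + 2), ∃ y : Fin (m i), y ≠ x i := fun i => by
    haveI : Nontrivial (Fin (m i)) := Fin.nontrivial_iff_two_le.2 (hm _)
    exact exists_ne _
  choose y hy using hne
  let i2 : Fin (n + 2) := ⟨n, by omega⟩
  let i3 : Fin (n + 2) := ⟨n + 1, by omega⟩
  have h23 : i2 ≠ i3 := by simp [i2, i3]
  have hinj : ∀ a b : (∀ i : Fin (n + 2), Fin (m i)),
      (⟨n + 2, a⟩ : Vertex m) = ⟨n + 2, b⟩ → a = b := fun a b h => eq_of_heq (Sigma.mk.inj h).2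
  refine ⟨⟨n, fun i => x (Fin.castLE (by omega) i)⟩, ⟨n + 2, Function.update x i2 (y i2)⟩,
    ⟨n + 2, Function.update x i3 (y i3)⟩, rfl, rfl, rfl, ⟨Nat.le_add_right _ _, fun i => rfl⟩,
    ⟨Nat.le_add_right _ _, fun i => ?_⟩, ⟨Nat.le_add_right _ _, fun i => ?_⟩, ?_, ?_, ?_⟩
  · refine Function.update_of_ne ?_ _ _
    intro e
    have := congrArg Fin.val e
    have hi : i.1 < n := i.2
    simp only [Fin.val_castLE, i2] at this
    omega
  · refine Function.update_of_ne ?_ _ _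
    intro e
    have := congrArg Fin.val e
    have hi : i.1 < n := i.2
    simp only [Fin.val_castLE, i3] at this
    omega
  · intro h
    have := congrFun (hinj _ _ h) i2
    rw [Function.update_self] at this
    exact hy _ this.symm
  · intro h
    have := congrFun (hinj _ _ h) i3
    rw [Function.update_self] at this
    exact hy _ this.symm
  · intro h
    have := congrFun (hinj _ _ h) i2
    rw [Function.update_self, Function.update_of_ne h23] at this
    exact hy _ this

end Helpers

/-- **Lemma.** Let `G` be a branch group on `T` and `K ⊴ H ≤_f G`.  If
`K ∩ rist_G(v) ≠ 1` for every vertex `v` of `T`, then `rist_G(n)' ≤ K` for some `n`. -/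
theorem rist_derived_le_of_meets_all_rists
    (m : ℕ → ℕ) (hm : ∀ n, 2 ≤ m n)
    (G : Type*) [Group G] [MulAction G (Vertex m)] (hG : IsBranchGroup m G)
    (H : Subgroup G) [H.FiniteIndex]
    (K : Subgroup G) (hKH : K ≤ H) (hKn : ∀ h ∈ H, ∀ k ∈ K, h * k * h⁻¹ ∈ K)
    (hmeet : ∀ v : Vertex m, K ⊓ rist G v ≠ ⊥) :
    ∃ n : ℕ, ⁅ristLayer m G n, ristLayer m G n⁆ ≤ K := by
  obtain ⟨n1, h1⟩ := BG.moved hm hG H K hKn hmeet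
  obtain ⟨N, hN⟩ := BG.stabilise hm hG H.normalCore (fun v : Vertex m => rist G v)
    (fun v w h => BG.rist_anti h) (fun g v x hx => BG.rist_conj hG g v x hx)
  let n := max n1 N
  refine ⟨n + 2, BG.assemble hG K _ fun w hw a ha b hb => ?_⟩
  obtain ⟨v, w2, w3, hv, hl2, hl3, hp, hp2, hp3, h12, h13, h23⟩ := BG.siblings hm n w hw
  have hn1 : n1 ≤ v.1 := by rw [hv]; exact le_max_left _ _
  have hNv : N ≤ v.1 := by rw [hv]; exact le_max_right _ _
  obtain ⟨k, hk, hkv⟩ := h1 v hn1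
  obtain ⟨c, hc, hca⟩ := hN v w2 hNv hp2 a (BG.rist_anti hp ha)
  obtain ⟨d, hd, hdb⟩ := hN v w3 hNv hp3 b (BG.rist_anti hp hb)
  have hc' := (rist G w2).inv_mem hc
  have hd' := (rist G w3).inv_mem hd
  have key := BG.local_comm hG H K hKn v k hk hkv (c⁻¹ * a) (d⁻¹ * b)
    ((rist G v).mul_mem (BG.rist_anti hp2 hc') (BG.rist_anti hp ha))
    ((rist G v).mul_mem (BG.rist_anti hp3 hd') (BG.rist_anti hp hb))
    (H.normalCore_le hca) (H.normalCore_le hdb)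
  have cb : Commute c⁻¹ b := BG.rist_comm hG hl2 h12.symm hc' hb
  have cd : Commute c⁻¹ d⁻¹ := BG.rist_comm hG (hl2.trans hl3.symm) h23 hc' hd'
  have ac : Commute a c⁻¹ := BG.rist_comm hG hl2.symm h12 ha hc'
  have ad : Commute a d⁻¹ := BG.rist_comm hG hl3.symm h13 ha hd'
  have bd : Commute b d⁻¹ := BG.rist_comm hG hl3.symm h13 hb hd'
  have e : ⁅c⁻¹ * a, d⁻¹ * b⁆ = ⁅a, b⁆ := by
    generalize c⁻¹ = p at *
    generalize d⁻¹ = q at *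
    have e1 : p * a * (q * b) = a * b * (p * q) := by
      calc p * a * (q * b) = p * (a * q) * b := by group
        _ = p * q * (a * b) := by rw [ad.eq]; group
        _ = a * b * (p * q) :=
          (((ac.mul_left cb.symm).mul_right (ad.mul_left bd))).eq.symm
    have e2 : q * b * (p * a) = b * a * (p * q) := by
      calc q * b * (p * a) = q * (b * p) * a := by group
        _ = (q * p) * (b * a) := by rw [← cb.eq]; group
        _ = p * q * (b * a) := by rw [cd.eq]
        _ = b * a * (p * q) :=
          (((cb.symm.mul_left ac).mul_right (bd.mul_left ad))).eq.symm
    have e3 : ∀ x y : G, ⁅x, y⁆ = (x * y) * (y * x)⁻¹ := fun x y => by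
      rw [commutatorElement_def]; group
    rw [e3, e3, e1, e2]; group
  rwa [e] at key
end

section
/- Let G be a branch group acting on a rooted tree T and let H be a subgroup of finite index in G. Then in any ascending chain (K_i)_{i∈ℕ} of normal subgroups of H there are at most |G:H| indices i for which the factor K_i/K_{i-1} is not virtually abelian. -/
/-!  Common definitions: rooted trees of type `(m n)`, tree automorphisms,
rigid stabilizers, branch groups, and auxiliary notions. -/

universe u

namespace ChainAux

attribute [local instance] commutatorElement

theorem comap_fin {A B : Type*} [Group A] [Group B] (f : A →* B) (R : Subgroup B)
    (hR : R.FiniteIndex) : (R.comap f).FiniteIndex := by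
  refine ⟨?_⟩
  rw [Subgroup.index_comap]
  exact (inferInstance : (R.subgroupOf f.range).FiniteIndex).index_ne_zero

open Vertex

variable {m : ℕ → ℕ}

theorem prefix_refl (v : Vertex m) : IsPrefix v v := ⟨le_rfl, fun _ => rfl⟩

theorem prefix_trans {u v w : Vertex m} (h1 : IsPrefix u v) (h2 : IsPrefix v w) :
    IsPrefix u w := by
  obtain ⟨a, ha⟩ := h1
  obtain ⟨b, hb⟩ := h2
  refine ⟨a.trans b, fun i => ?_⟩
  rw [← ha i, ← hb]
  rfl

theorem prefix_unique {u v w : Vertex m} (h1 : IsPrefix u w) (h2 : IsPrefix v w)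
    (h : u.1 = v.1) : u = v := by
  obtain ⟨n, u⟩ := u
  obtain ⟨k, v⟩ := v
  obtain ⟨a, ha⟩ := h1
  obtain ⟨b, hb⟩ := h2
  simp only at h
  subst h
  have : u = v := by
    funext i
    exact (ha i).symm.trans (hb i)
  rw [this]

/-- truncation -/
def trunc (w : Vertex m) (k : ℕ) (h : k ≤ w.1) : Vertex m :=
  ⟨k, fun i => w.2 (Fin.castLE h i)⟩

theorem trunc_prefix (w : Vertex m) (k : ℕ) (h : k ≤ w.1) : IsPrefix (trunc w k h) w :=
  ⟨h, fun _ => rfl⟩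

theorem trunc_child (w : Vertex m) (k : ℕ) (h : w.1 = k + 1) :
    IsChild (trunc w k (by omega)) w := ⟨h, trunc_prefix _ _ _⟩

theorem prefix_trunc {v w : Vertex m} (h : IsPrefix v w) (k : ℕ) (hk : k ≤ w.1)
    (hv : v.1 ≤ k) : IsPrefix v (trunc w k hk) := by
  obtain ⟨a, ha⟩ := h
  exact ⟨hv, fun i => ha i⟩

variable {G : Type*} [Group G] [MulAction G (Vertex m)]

theorem level_smul (hG : IsBranchGroup m G) (g : G) : ∀ (n : ℕ) (v : Vertex m), v.1 = n →
    (g • v).1 = n := by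
  intro n
  induction n with
  | zero =>
    intro v hv
    by_contra hne
    obtain ⟨k, hk⟩ := Nat.exists_eq_succ_of_ne_zero hne
    have h := (hG.aut g⁻¹ _ _).1 (trunc_child (g • v) k hk)
    rw [inv_smul_smul] at h
    have := h.1
    omega
  | succ n ih =>
    intro v hv
    have h := (hG.aut g _ _).1 (trunc_child v n hv)
    rw [h.1, ih _ rfl]

theorem smul_level (hG : IsBranchGroup m G) (g : G) (v : Vertex m) : (g • v).1 = v.1 :=
  level_smul hG g _ v rfl

theorem prefix_smul (hG : IsBranchGroup m G) (g : G) {v : Vertex m} :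
    ∀ (d : ℕ) (w : Vertex m), w.1 = v.1 + d → IsPrefix v w → IsPrefix (g • v) (g • w) := by
  intro d
  induction d with
  | zero =>
    intro w h hp
    rw [prefix_unique hp (prefix_refl w) (by omega)]
    exact prefix_refl _
  | succ d ih =>
    intro w h hp
    have h1 := ih (trunc w (v.1 + d) (by omega)) rfl (prefix_trunc hp _ _ (by omega))
    exact prefix_trans h1 ((hG.aut g _ _).1 (trunc_child w (v.1 + d) (by omega))).2

theorem pre_smul (hG : IsBranchGroup m G) (g : G) {v w : Vertex m} (h : IsPrefix v w) :
    IsPrefix (g • v) (g • w) :=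
  prefix_smul hG g (w.1 - v.1) w (by have := h.1; omega) h

theorem mem_rist {v : Vertex m} {g : G} :
    g ∈ rist G v ↔ ∀ w, ¬ IsPrefix v w → g • w = w := by
  simp [rist, Subgroup.mem_iInf]

theorem rist_pres {v : Vertex m} {a : G} (ha : a ∈ rist G v) {x : Vertex m}
    (hx : IsPrefix v x) : IsPrefix v (a • x) := by
  by_contra h
  have h1 := mem_rist.1 ha _ h
  have h2 : a • x = x := smul_left_cancel a h1
  rw [h2] at h
  exact h hx

theorem rist_comm (hG : IsBranchGroup m G) {v w : Vertex m} (hl : v.1 = w.1) (hne : v ≠ w)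
    {a b : G} (ha : a ∈ rist G v) (hb : b ∈ rist G w) : Commute a b := by
  have key : ∀ x : Vertex m, (a * b) • x = (b * a) • x := by
    intro x
    rw [mul_smul, mul_smul]
    by_cases hv : IsPrefix v x
    · have hd : ∀ y, IsPrefix v y → ¬ IsPrefix w y := fun y h1 h2 =>
        hne (prefix_unique h1 h2 hl)
      rw [mem_rist.1 hb x (hd x hv), mem_rist.1 hb _ (hd _ (rist_pres ha hv))]
    · rw [mem_rist.1 ha x hv]
      by_cases hw : IsPrefix w x
      · apply mem_rist.1 ha
        exact fun h1 => hne (prefix_unique h1 (rist_pres hb hw) hl)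
      · rw [mem_rist.1 hb x hw, mem_rist.1 ha x hv]
  have : (b * a)⁻¹ * (a * b) = 1 := by
    apply hG.faithful
    intro x
    rw [mul_smul, key, inv_smul_smul]
  exact (inv_mul_eq_one.1 this).symm

theorem rist_conj (hG : IsBranchGroup m G) {v : Vertex m} {a : G} (k : G)
    (ha : a ∈ rist G v) : k * a * k⁻¹ ∈ rist G (k • v) := by
  rw [mem_rist]
  intro w hw
  have : ¬ IsPrefix v (k⁻¹ • w) := by
    intro h
    have := pre_smul hG k h
    rw [smul_inv_smul] at this
    exact hw this
  rw [mul_smul, mul_smul, mem_rist.1 ha _ this, smul_inv_smul]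

theorem comm_mem (hG : IsBranchGroup m G) {H P : Subgroup G} (hP : ∀ h ∈ H, ∀ k ∈ P, h * k * h⁻¹ ∈ P)
    {v : Vertex m} {k a b : G} (hk : k ∈ P) (hkv : k • v ≠ v) (haH : a ∈ H) (hbH : b ∈ H)
    (ha : a ∈ rist G v) (hb : b ∈ rist G v) : ⁅a, b⁆ ∈ P := by
  have hc : a * k * a⁻¹ * k⁻¹ ∈ P := P.mul_mem (hP a haH k hk) (P.inv_mem hk)
  have hd : k * a⁻¹ * k⁻¹ ∈ rist G (k • v) := rist_conj hG k (inv_mem ha)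
  have hcomm : Commute (k * a⁻¹ * k⁻¹) b := rist_comm hG (smul_level hG k v) hkv hd hb
  have h2 := P.mul_mem hc (hP b hbH _ (P.inv_mem hc))
  have : ⁅a, b⁆ = a * k * a⁻¹ * k⁻¹ * (b * (a * k * a⁻¹ * k⁻¹)⁻¹ * b⁻¹) := by
    set d := k * a⁻¹ * k⁻¹ with hdd
    have e : a * k * a⁻¹ * k⁻¹ = a * d := by rw [hdd]; group
    have h3 : d * b * d⁻¹ = b := by rw [hcomm.eq]; group
    rw [e, commutatorElement_def]
    calc a * b * a⁻¹ * b⁻¹ = a * (d * b * d⁻¹) * a⁻¹ * b⁻¹ := by rw [h3]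
      _ = _ := by group
  rw [this]
  exact h2

/-- ray -/
def ray (hm : ∀ n, 2 ≤ m n) (n : ℕ) : Vertex m :=
  ⟨n, fun i => ⟨0, by have := hm i; omega⟩⟩

theorem ray_prefix (hm : ∀ n, 2 ≤ m n) {n k : ℕ} (h : n ≤ k) :
    IsPrefix (ray hm n) (ray hm k) := ⟨h, fun _ => rfl⟩

theorem moved_mono (hG : IsBranchGroup m G) {v w : Vertex m} (h : IsPrefix v w) {k : G}
    (hk : k • v ≠ v) : k • w ≠ w := by
  intro hw
  apply hk
  have h1 := pre_smul hG k h
  rw [hw] at h1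
  exact prefix_unique h1 h (smul_level hG k v)

theorem picoprod_mem {A ι : Type*} [Group A] [Fintype ι] {N : ι → Subgroup A}
    (hcomm : Pairwise fun i j : ι => ∀ x y : A, x ∈ N i → y ∈ N j → Commute x y)
    (f : ∀ i, N i) (P : Subgroup A) (h : ∀ w, (f w : A) ∈ P) :
    Subgroup.noncommPiCoprod hcomm f ∈ P := by
  change Finset.univ.noncommProd (fun i => (f i : A))
    (fun i _ j _ hij => hcomm hij _ _ (f i).2 (f j).2) ∈ P
  apply Subgroup.noncommProd_mem
  intro w _
  exact h w

/-- the direct product map -/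
noncomputable def phi (hG : IsBranchGroup m G) (n : ℕ) :
    (∀ w : (∀ i : Fin n, Fin (m i)), rist G (⟨n, w⟩ : Vertex m)) →* G :=
  Subgroup.noncommPiCoprod (H := fun w : (∀ i : Fin n, Fin (m i)) => rist G (⟨n, w⟩ : Vertex m))
    (by
      intro v w hvw x y hx hy
      refine rist_comm (v := ⟨n, v⟩) (w := ⟨n, w⟩) hG rfl ?_ hx hy
      intro h
      apply hvw
      exact eq_of_heq (Sigma.mk.inj h).2)

theorem phi_mem (hG : IsBranchGroup m G) (n : ℕ)
    (f : ∀ w : (∀ i : Fin n, Fin (m i)), rist G (⟨n, w⟩ : Vertex m)) (P : Subgroup G)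
    (h : ∀ w, (f w : G) ∈ P) : phi hG n f ∈ P := by
  exact picoprod_mem _ f P h

theorem phi_range (hG : IsBranchGroup m G) (n : ℕ) : (phi hG n).range = ristLayer m G n := by
  refine (Subgroup.noncommPiCoprod_range
    (H := fun w : (∀ i : Fin n, Fin (m i)) => rist G (⟨n, w⟩ : Vertex m))).trans ?_
  unfold ristLayer ristSet
  apply le_antisymm
  · exact iSup_le fun w => le_iSup₂_of_le (⟨n, w⟩ : Vertex m) rfl le_rfl
  · refine iSup₂_le fun v hv => ?_
    obtain ⟨k, v⟩ := v
    have : k = n := hv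
    subst this
    exact le_iSup (fun w : (∀ i : Fin k, Fin (m i)) => rist G (⟨k, w⟩ : Vertex m)) v

theorem phi_trivial (hG : IsBranchGroup m G) (n : ℕ)
    (f : ∀ w : (∀ i : Fin n, Fin (m i)), rist G (⟨n, w⟩ : Vertex m))
    (w : ∀ i : Fin n, Fin (m i))
    (h : ∀ u, IsPrefix (⟨n, w⟩ : Vertex m) u → phi hG n f • u = u) : f w = 1 := by
  classical
  have e : f = Pi.mulSingle w (f w) * Function.update f w 1 := by
    funext x
    by_cases hx : x = w
    · subst hx; simp
    · simp [Pi.mulSingle, Function.update, hx]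
  have h1 : phi hG n (Pi.mulSingle w (f w)) = f w := by
    exact Subgroup.noncommPiCoprod_mulSingle
      (H := fun w : (∀ i : Fin n, Fin (m i)) => rist G (⟨n, w⟩ : Vertex m)) w (f w)
  have h2 : ∀ u, IsPrefix (⟨n, w⟩ : Vertex m) u →
      phi hG n (Function.update f w 1) ∈ MulAction.stabilizer G u := by
    intro u hu
    apply phi_mem
    intro x
    by_cases hx : x = w
    · subst hx; simp
    · rw [Function.update_of_ne hx]
      refine mem_rist.1 (f x).2 u ?_
      intro hxu
      have := prefix_unique hxu hu rfl
      apply hx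
      exact eq_of_heq (Sigma.mk.inj this).2
  apply Subtype.ext
  apply hG.faithful
  intro u
  by_cases hu : IsPrefix (⟨n, w⟩ : Vertex m) u
  · have h3 := h u hu
    rw [e, map_mul, h1, mul_smul, MulAction.mem_stabilizer_iff.1 (h2 u hu)] at h3
    exact h3
  · exact mem_rist.1 (f w).2 u hu

/-- the finite index subgroup of the product -/
def DD (m : ℕ → ℕ) (n : ℕ) (G : Type*) [Group G] [MulAction G (Vertex m)] (H : Subgroup G) :
    Subgroup (∀ w : (∀ i : Fin n, Fin (m i)), rist G (⟨n, w⟩ : Vertex m)) :=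
  ⨅ w, H.comap ((rist G (⟨n, w⟩ : Vertex m)).subtype.comp (Pi.evalMonoidHom _ w))

theorem mem_DD {n : ℕ} {H : Subgroup G}
    {f : ∀ w : (∀ i : Fin n, Fin (m i)), rist G (⟨n, w⟩ : Vertex m)} (hf : f ∈ DD m n G H) (w) :
    (f w : G) ∈ H := by
  have := (Subgroup.mem_iInf.1 hf) w
  exact this

theorem RR_finite (hG : IsBranchGroup m G) (n : ℕ) (H : Subgroup G) [H.FiniteIndex] :
    ((DD m n G H).map (phi hG n)).FiniteIndex := by
  have h1 : (DD m n G H).FiniteIndex := by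
    unfold DD
    apply Subgroup.finiteIndex_iInf
    intro w
    exact comap_fin _ _ inferInstance
  refine ⟨?_⟩
  rw [Subgroup.index_map, phi_range]
  have h2 : (DD m n G H ⊔ (phi hG n).ker).FiniteIndex :=
    Subgroup.finiteIndex_of_le (le_sup_left : DD m n G H ≤ _)
  exact mul_ne_zero h2.index_ne_zero (hG.ristFiniteIndex n).index_ne_zero

theorem card_chain {α : Type*} [Finite α] (B : ℕ → Set α) (hB : Monotone B) (s : Finset ℕ)
    (hs : ∀ i ∈ s, ¬ B (i + 1) ⊆ B i) : s.card ≤ Nat.card α := by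
  have h : ∀ i : s, ∃ x, x ∈ B (i + 1) ∧ x ∉ B i := fun i => Set.not_subset.1 (hs i i.2)
  choose f hf using h
  have hlt : ∀ i j : s, (i : ℕ) < j → f i ≠ f j := by
    intro i j hij he
    apply (hf j).2
    rw [← he]
    exact hB hij (hf i).1
  have hinj : Function.Injective f := by
    intro i j hij
    rcases lt_trichotomy (i : ℕ) j with h | h | h
    · exact absurd hij (hlt i j h)
    · exact Subtype.ext h
    · exact absurd hij.symm (hlt j i h)
  have := Nat.card_le_card_of_injective f hinj
  simpa using this

/-- cosets whose translate of the ray is moved -/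
def BB (hm : ∀ n, 2 ≤ m n) (H P : Subgroup G) : Set (G ⧸ H) :=
  {q | ∃ g : G, (g : G ⧸ H) = q ∧ ∃ n, ∃ k ∈ P, k • g⁻¹ • ray hm n ≠ g⁻¹ • ray hm n}

theorem BB_rep (hm : ∀ n, 2 ≤ m n) {H P : Subgroup G}
    (hP : ∀ h ∈ H, ∀ k ∈ P, h * k * h⁻¹ ∈ P) {g g' : G} (h : (g : G ⧸ H) = (g' : G ⧸ H)) {n : ℕ}
    (hg : ∃ k ∈ P, k • g⁻¹ • ray hm n ≠ g⁻¹ • ray hm n) :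
    ∃ k ∈ P, k • g'⁻¹ • ray hm n ≠ g'⁻¹ • ray hm n := by
  obtain ⟨k, hk, hne⟩ := hg
  have hh : g'⁻¹ * g ∈ H := QuotientGroup.eq.1 h.symm
  refine ⟨_, hP _ hh k hk, fun he => hne ?_⟩
  have : (g'⁻¹ * g) • (k • g⁻¹ • ray hm n) = (g'⁻¹ * g) • (g⁻¹ • ray hm n) := by
    simp only [smul_smul] at he ⊢
    convert he using 2 <;> group
  exact smul_left_cancel _ this

theorem exists_abelian (hm : ∀ n, 2 ≤ m n) (hG : IsBranchGroup m G) (H P Q : Subgroup G)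
    [H.FiniteIndex] (hP : ∀ h ∈ H, ∀ k ∈ P, h * k * h⁻¹ ∈ P)
    (hPQ : BB hm H Q ⊆ BB hm H P) :
    ∃ R : Subgroup G, R.FiniteIndex ∧
      ∀ x ∈ R, ∀ y ∈ R, x ∈ Q → y ∈ Q → ⁅x, y⁆ ∈ P := by
  classical
  have : Fintype (G ⧸ H) := Fintype.ofFinite _
  have h0 : ∀ q : G ⧸ H, ∃ n, q ∈ BB hm H P → ∀ g : G, (g : G ⧸ H) = q →
      ∃ k ∈ P, k • g⁻¹ • ray hm n ≠ g⁻¹ • ray hm n := by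
    intro q
    by_cases hq : q ∈ BB hm H P
    · obtain ⟨g, hg, n, hn⟩ := hq
      exact ⟨n, fun _ g' hg' => BB_rep hm hP (hg.trans hg'.symm) hn⟩
    · exact ⟨0, fun h => absurd h hq⟩
  choose N hN using h0
  let n := Finset.univ.sup N
  have hn : ∀ g : G, (g : G ⧸ H) ∈ BB hm H P →
      ∃ k ∈ P, k • g⁻¹ • ray hm n ≠ g⁻¹ • ray hm n := by
    intro g hg
    obtain ⟨k, hk, hne⟩ := hN _ hg g rfl
    exact ⟨k, hk, moved_mono hG (pre_smul hG _
      (ray_prefix hm (Finset.le_sup (f := N) (Finset.mem_univ _)))) hne⟩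
  refine ⟨(DD m n G H).map (phi hG n), RR_finite hG n H, ?_⟩
  rintro _ ⟨f, hf, rfl⟩ _ ⟨f', hf', rfl⟩ hx hy
  rw [← map_commutatorElement]
  apply phi_mem
  intro w
  obtain ⟨g, hg⟩ := hG.trans (ray hm n) ⟨n, w⟩ rfl
  by_cases hgB : ((g⁻¹ : G) : G ⧸ H) ∈ BB hm H P
  · obtain ⟨k, hk, hne⟩ := hn _ hgB
    rw [inv_inv, hg] at hne
    exact comm_mem hG hP hk hne (mem_DD hf w) (mem_DD hf' w) (f w).2 (f' w).2
  · have hfix : ∀ u, IsPrefix (⟨n, w⟩ : Vertex m) u → phi hG n f • u = u := by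
      intro u hu
      by_contra hne
      obtain ⟨g', hg'⟩ := hG.trans (ray hm u.1) u rfl
      have hB : ((g'⁻¹ : G) : G ⧸ H) ∈ BB hm H Q := by
        refine ⟨g'⁻¹, rfl, u.1, _, hx, ?_⟩
        rw [inv_inv, hg']
        exact hne
      obtain ⟨k, hk, hne'⟩ := hn _ (hPQ hB)
      have hp := pre_smul hG g' (ray_prefix hm (show n ≤ u.1 from hu.1))
      rw [hg'] at hp
      have he := prefix_unique hp hu (smul_level hG _ _)
      rw [inv_inv, he, ← hg] at hne'
      exact hgB ⟨g⁻¹, rfl, n, k, hk, by rwa [inv_inv]⟩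
    have h1 := phi_trivial hG n f w hfix
    have : ⁅f, f'⁆ w = 1 := by
      simp [commutatorElement_def, h1]
    rw [this]
    exact P.one_mem

end ChainAux

/-- **Corollary.** Let `G` be a branch group on `T` and `H ≤ G` of finite index.  Then
in any ascending chain of normal subgroups of `H` there are at most `|G:H|` factors
that are not virtually abelian. -/
theorem chain_few_nonvirtuallyabelian_factors
    (m : ℕ → ℕ) (hm : ∀ n, 2 ≤ m n)
    (G : Type*) [Group G] [MulAction G (Vertex m)] (hG : IsBranchGroup m G)
    (H : Subgroup G) [H.FiniteIndex]
    (K : ℕ → Subgroup ↥H) (hnorm : ∀ i, (K i).Normal) (hmono : ∀ i, K i ≤ K (i + 1)) :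
    ∀ s : Finset ℕ, (∀ i ∈ s, ¬ FactorVirtuallyAbelian (K i) (K (i + 1))) →
      s.card ≤ H.index := by
  intro s hs
  have hP : ∀ i, ∀ h ∈ H, ∀ k ∈ (K i).map H.subtype, h * k * h⁻¹ ∈ (K i).map H.subtype := by
    rintro i h hh _ ⟨k, hk, rfl⟩
    exact ⟨⟨h, hh⟩ * k * ⟨h, hh⟩⁻¹, (hnorm i).conj_mem k hk _, rfl⟩
  have hB : Monotone (fun i => ChainAux.BB hm H ((K i).map H.subtype)) := by
    apply monotone_nat_of_le_succ
    rintro i q ⟨g, hg, n, k, hk, hne⟩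
    exact ⟨g, hg, n, k, Subgroup.map_mono (hmono i) hk, hne⟩
  refine ChainAux.card_chain _ hB s (fun i hi hsub => hs i hi ?_)
  obtain ⟨R, hR, hcomm⟩ := ChainAux.exists_abelian hm hG H _ _ (hP i) hsub
  have hn : ((K i).subgroupOf (K (i + 1))).Normal := (hnorm i).comap _
  refine ⟨hn, ?_⟩
  refine ⟨(R.comap (H.subtype.comp (K (i + 1)).subtype)).map (QuotientGroup.mk' _), ?_, ?_⟩
  · refine ⟨?_⟩
    have h1 : (R.comap (H.subtype.comp (K (i + 1)).subtype)).FiniteIndex :=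
      ChainAux.comap_fin _ _ hR
    exact ne_zero_of_dvd_ne_zero h1.index_ne_zero
      (Subgroup.index_map_dvd _ (QuotientGroup.mk'_surjective _))
  · rintro _ ⟨x, hx, rfl⟩ _ ⟨y, hy, rfl⟩
    rw [← map_mul, ← map_mul]
    apply QuotientGroup.eq.2
    have := hcomm _ (R.inv_mem hy) _ (R.inv_mem hx) ⟨_, (y⁻¹).2, rfl⟩ ⟨_, (x⁻¹).2, rfl⟩
    obtain ⟨z, hz, hze⟩ := this
    have e : z = (((x * y)⁻¹ * (y * x) : K (i + 1)) : H) := by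
      apply Subtype.ext
      refine Eq.trans hze ?_
      simp [commutatorElement_def, mul_assoc]
    rw [Subgroup.mem_subgroupOf, ← e]
    exact hz
end

section
/- Let G be a branch group acting on a rooted tree T and let H be a subgroup of finite index in G. Then b(H) is finite and equals the maximum, over all n, of the number of H-orbits on the layer L_n. In particular b(H) ≤ |G:H|. -/
/-!  Common definitions: rooted trees of type `(m n)`, tree automorphisms,
rigid stabilizers, branch groups, and auxiliary notions. -/

universe u

namespace BranchAux

open Vertex
open scoped commutatorElement

variable {m : ℕ → ℕ}

lemma prefix_refl (v : Vertex m) : IsPrefix v v := ⟨le_rfl, fun _ => rfl⟩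

lemma prefix_trans {u v w : Vertex m} (h1 : IsPrefix u v) (h2 : IsPrefix v w) :
    IsPrefix u w := by
  obtain ⟨a, ha⟩ := h1
  obtain ⟨b, hb⟩ := h2
  refine ⟨a.trans b, fun i => ?_⟩
  rw [← ha i, ← hb]
  rfl

lemma prefix_of_le {u v w : Vertex m} (h1 : IsPrefix u w) (h2 : IsPrefix v w)
    (h : u.1 ≤ v.1) : IsPrefix u v := by
  obtain ⟨a, ha⟩ := h1
  obtain ⟨b, hb⟩ := h2
  refine ⟨h, fun i => ?_⟩
  rw [← ha i, ← hb]
  rfl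

lemma prefix_eq {u v : Vertex m} (h1 : IsPrefix u v) (h : u.1 = v.1) : u = v := by
  obtain ⟨n, u⟩ := u
  obtain ⟨k, v⟩ := v
  simp only at h
  subst h
  obtain ⟨a, ha⟩ := h1
  congr 1
  funext i
  exact (ha i).symm

lemma eq_of_common {u v w : Vertex m} (h1 : IsPrefix u w) (h2 : IsPrefix v w)
    (h : u.1 = v.1) : u = v := prefix_eq (prefix_of_le h1 h2 h.le) h

lemma exists_trunc (w : Vertex m) {n : ℕ} (h : n ≤ w.1) :
    ∃ p : Vertex m, p.1 = n ∧ IsPrefix p w :=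
  ⟨⟨n, fun i => w.2 (Fin.castLE h i)⟩, rfl, h, fun _ => rfl⟩

lemma exists_ext (hm : ∀ n, 2 ≤ m n) (v : Vertex m) {n : ℕ} (h : v.1 ≤ n) :
    ∃ w : Vertex m, w.1 = n ∧ IsPrefix v w := by
  refine ⟨⟨n, fun i => if hi : i.1 < v.1 then v.2 ⟨i.1, hi⟩ else
    ⟨0, lt_of_lt_of_le (by norm_num) (hm i)⟩⟩, rfl, h, fun i => ?_⟩
  simp

variable {G : Type*} [Group G] [MulAction G (Vertex m)]

lemma child_parent (w : Vertex m) {n : ℕ} (h : w.1 = n + 1) :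
    ∃ p : Vertex m, p.1 = n ∧ IsChild p w := by
  obtain ⟨p, hp, hpw⟩ := exists_trunc w (n := n) (by omega)
  exact ⟨p, hp, by omega, hpw⟩

lemma level_smul (hG : IsBranchGroup m G) (g : G) (v : Vertex m) : (g • v).1 = v.1 := by
  have key : ∀ n, ∀ v : Vertex m, v.1 = n → (g • v).1 = n := by
    intro n
    induction n with
    | zero =>
      intro v hv
      by_contra hne
      obtain ⟨k, hk⟩ := Nat.exists_eq_succ_of_ne_zero hne
      obtain ⟨p, hp, hc⟩ := child_parent (g • v) hk
      have := (hG.aut g⁻¹ _ _).1 hc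
      rw [inv_smul_smul] at this
      have := this.1
      omega
    | succ n ih =>
      intro v hv
      obtain ⟨p, hp, hc⟩ := child_parent v hv
      have h1 := ((hG.aut g _ _).1 hc).1
      rw [h1, ih p hp]
  exact key _ v rfl

lemma prefix_smul (hG : IsBranchGroup m G) (g : G) {v w : Vertex m} (h : IsPrefix v w) :
    IsPrefix (g • v) (g • w) := by
  have key : ∀ k, ∀ w : Vertex m, w.1 = v.1 + k → IsPrefix v w →
      IsPrefix (g • v) (g • w) := by
    intro k
    induction k with
    | zero =>
      intro w hw hp
      rw [prefix_eq hp hw.symm]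
      exact prefix_refl _
    | succ k ih =>
      intro w hw hp
      obtain ⟨p, hp1, hc⟩ := child_parent w (n := v.1 + k) (by omega)
      exact prefix_trans (ih p hp1 (prefix_of_le hp hc.2 (by omega)))
        ((hG.aut g _ _).1 hc).2
  obtain ⟨a, -⟩ := id h
  exact key (w.1 - v.1) w (by omega) h

lemma prefix_smul_iff (hG : IsBranchGroup m G) (g : G) {v w : Vertex m} :
    IsPrefix (g • v) w ↔ IsPrefix v (g⁻¹ • w) := by
  constructor
  · intro h
    simpa using prefix_smul hG g⁻¹ h
  · intro h
    simpa using prefix_smul hG g h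

lemma mem_rist {v : Vertex m} {g : G} :
    g ∈ rist G v ↔ ∀ w, ¬ IsPrefix v w → g • w = w := by
  simp [rist, Subgroup.mem_iInf]

lemma commute_of (hG : IsBranchGroup m G) {x y : G}
    (h : ∀ w : Vertex m, x • w = w ∨ y • w = w) : Commute x y := by
  have main : ∀ {x y : G}, (∀ w : Vertex m, x • w = w ∨ y • w = w) →
      ∀ w : Vertex m, y • w = w → y • x • w = x • w := by
    intro x y h w hw
    rcases h (x • w) with h1 | h1
    · have h2 : x • w = w := by simpa using h1
      rw [h2, hw]
    · exact h1
  have e : ∀ w : Vertex m, (x * y) • w = (y * x) • w := by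
    intro w
    rw [mul_smul, mul_smul]
    rcases h w with h1 | h1
    · rw [h1, main (fun w => (h w).symm) w h1]
    · rw [h1, main h w h1]
  have := hG.faithful ((y * x)⁻¹ * (x * y)) (fun v => by
    rw [mul_smul, e, inv_smul_smul])
  exact (inv_mul_eq_one.1 this).symm

lemma commute_rist (hG : IsBranchGroup m G) {u v : Vertex m} (huv : u ≠ v) (hl : u.1 = v.1)
    {x y : G} (hx : x ∈ rist G u) (hy : y ∈ rist G v) : Commute x y := by
  apply commute_of hG
  intro w
  by_cases h : IsPrefix u w
  · right
    exact mem_rist.1 hy w (fun h' => huv (eq_of_common h h' hl))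
  · left
    exact mem_rist.1 hx w h

lemma rist_inf (hG : IsBranchGroup m G) {u v : Vertex m} (huv : u ≠ v) (hl : u.1 = v.1)
    {x : G} (hx : x ∈ rist G u) (hy : x ∈ rist G v) : x = 1 := by
  apply hG.faithful
  intro w
  by_cases h : IsPrefix u w
  · exact mem_rist.1 hy w (fun h' => huv (eq_of_common h h' hl))
  · exact mem_rist.1 hx w h

lemma rist_mono {u v : Vertex m} (h : IsPrefix u v) : rist G v ≤ rist G u := by
  intro x hx
  rw [mem_rist] at *
  exact fun w hw => hx w (fun h' => hw (prefix_trans h h'))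

lemma conj_mem_rist (hG : IsBranchGroup m G) {v : Vertex m} {x : G} (g : G)
    (hx : x ∈ rist G v) : g * x * g⁻¹ ∈ rist G (g • v) := by
  rw [mem_rist] at *
  intro w hw
  rw [prefix_smul_iff hG] at hw
  rw [mul_smul, mul_smul, hx _ hw, smul_inv_smul]

def layerEquiv (m : ℕ → ℕ) (n : ℕ) : layer m n ≃ (∀ i : Fin n, Fin (m i)) where
  toFun v := fun i => v.1.2 (Fin.cast v.2.symm i)
  invFun f := ⟨⟨n, f⟩, rfl⟩
  left_inv := by
    rintro ⟨⟨k, f⟩, h⟩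
    have h' : k = n := h
    subst h'
    rfl
  right_inv f := rfl

instance (n : ℕ) : Finite (layer m n) := Finite.of_equiv _ (layerEquiv m n).symm

lemma card_layer (hm : ∀ n, 2 ≤ m n) (n : ℕ) : 2 ^ n ≤ Nat.card (layer m n) := by
  rw [Nat.card_congr (layerEquiv m n), Nat.card_pi]
  calc 2 ^ n = ∏ _i : Fin n, 2 := by simp
    _ ≤ _ := Finset.prod_le_prod' (fun i _ => by simpa using hm i)

lemma layer_nonempty (hm : ∀ n, 2 ≤ m n) (n : ℕ) : ∃ v : Vertex m, v.1 = n :=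
  ⟨⟨n, fun i => ⟨0, lt_of_lt_of_le (by norm_num) (hm i)⟩⟩, rfl⟩

lemma infinite_G (hm : ∀ n, 2 ≤ m n) (hG : IsBranchGroup m G) : Infinite G := by
  by_contra hfin
  rw [not_infinite_iff_finite] at hfin
  have h : ∀ n, 2 ^ n ≤ Nat.card G := by
    intro n
    obtain ⟨v, hv⟩ := layer_nonempty hm n
    refine (card_layer hm n).trans ?_
    refine Nat.card_le_card_of_surjective
      (fun g : G => (⟨g • v, (level_smul hG g v).trans hv⟩ : layer m n)) ?_
    rintro ⟨w, hw⟩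
    obtain ⟨g, hg⟩ := hG.trans v w (hv.trans hw.symm)
    exact ⟨g, Subtype.ext hg⟩
  exact absurd (h (Nat.card G)) (not_le.2 Nat.lt_two_pow_self)

lemma infinite_rist (hm : ∀ n, 2 ≤ m n) (hG : IsBranchGroup m G) (v : Vertex m) :
    Infinite (rist G v) := by
  by_contra hfin
  rw [not_infinite_iff_finite] at hfin
  have hall : ∀ u : layer m v.1, Finite (rist G u.1) := by
    rintro ⟨u, hu⟩
    obtain ⟨g, hg⟩ := hG.trans u v hu
    refine Finite.of_injective (β := rist G v) (fun x => ⟨g * x.1 * g⁻¹, by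
      have := conj_mem_rist hG g x.2
      rwa [hg] at this⟩) ?_
    intro x y hxy
    have := congrArg Subtype.val hxy
    simp only [mul_left_inj, mul_right_inj] at this
    exact Subtype.ext this
  have hcomm : Pairwise fun i j : layer m v.1 =>
      ∀ x y : G, x ∈ rist G i.1 → y ∈ rist G j.1 → Commute x y := by
    intro i j hij x y hx hy
    exact commute_rist hG (fun h => hij (Subtype.ext h)) (i.2.trans j.2.symm) hx hy
  have : Fintype (layer m v.1) := Fintype.ofFinite _
  have hr := Subgroup.noncommPiCoprod_range (hcomm := hcomm)
  have hf : Finite (ristLayer m G v.1) := by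
    have e : ristLayer m G v.1 = ⨆ i : layer m v.1, rist G i.1 := by
      rw [ristLayer, ristSet, iSup_subtype']
    rw [e, ← hr]
    exact Finite.of_surjective _ (MonoidHom.rangeRestrict_surjective _)
  have := hG.ristFiniteIndex v.1
  have hinf := infinite_G hm hG
  have : Finite G := by
    have := (Subgroup.groupEquivQuotientProdSubgroup (s := ristLayer m G v.1))
    exact Finite.of_equiv _ this.symm
  exact not_finite G

lemma infinite_inf (hm : ∀ n, 2 ≤ m n) (hG : IsBranchGroup m G) (H : Subgroup G)
    [H.FiniteIndex] (v : Vertex m) : Infinite (H.subgroupOf (rist G v)) := by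
  have := infinite_rist hm hG v
  by_contra hfin
  rw [not_infinite_iff_finite] at hfin
  have : Finite (rist G v) :=
    Finite.of_equiv _
      (Subgroup.groupEquivQuotientProdSubgroup (s := H.subgroupOf (rist G v))).symm
  exact not_finite (rist G v)

lemma exists_nontriv (hm : ∀ n, 2 ≤ m n) (hG : IsBranchGroup m G) (H : Subgroup G)
    [H.FiniteIndex] (v : Vertex m) : ∃ x ∈ H, x ∈ rist G v ∧ x ≠ 1 := by
  have := infinite_inf hm hG H v
  obtain ⟨x, hx⟩ := exists_ne (1 : H.subgroupOf (rist G v))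
  refine ⟨x.1.1, x.2, x.1.2, fun h => hx ?_⟩
  exact Subtype.ext (Subtype.ext h)

lemma exists_moved (hG : IsBranchGroup m G) {g : G} (h : g ≠ 1) :
    ∃ v : Vertex m, g • v ≠ v := by
  by_contra! hc
  exact h (hG.faithful g hc)

lemma exists_noncomm (hm : ∀ n, 2 ≤ m n) (hG : IsBranchGroup m G) (H : Subgroup G)
    [H.FiniteIndex] (v : Vertex m) :
    ∃ a b : G, a ∈ H ∧ b ∈ H ∧ a ∈ rist G v ∧ b ∈ rist G v ∧ ¬ Commute a b := by
  obtain ⟨a, haH, ha, ha1⟩ := exists_nontriv hm hG H v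
  obtain ⟨u, hu⟩ := exists_moved hG ha1
  have hvu : IsPrefix v u := by
    by_contra h
    exact hu (mem_rist.1 ha u h)
  obtain ⟨b, hbH, hb, hb1⟩ := exists_nontriv hm hG H u
  refine ⟨a, b, haH, hbH, ha, rist_mono hvu hb, fun hc => hb1 ?_⟩
  have h1 := conj_mem_rist hG a hb
  rw [hc.eq, mul_inv_cancel_right] at h1
  exact rist_inf hG hu (level_smul hG a u) h1 hb

/-- A nontrivial normal subgroup contains commutators. -/
lemma key (hG : IsBranchGroup m G) (H : Subgroup G) (N : Subgroup H) (hN : N.Normal)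
    (g : H) (hg : g ∈ N) (u : Vertex m) (hu : g.1 • u ≠ u) (a b : H)
    (ha : a.1 ∈ rist G u) (hb : b.1 ∈ rist G u) : ⁅a, b⁆ ∈ N := by
  have h1 : a * (g * a⁻¹ * g⁻¹) ∈ N := by
    have : a * (g * a⁻¹ * g⁻¹) = (a * g * a⁻¹) * g⁻¹ := by group
    rw [this]
    exact N.mul_mem (hN.conj_mem g hg a) (N.inv_mem hg)
  set c : H := g * a⁻¹ * g⁻¹ with hc
  have hcr : c.1 ∈ rist G (g.1 • u) := conj_mem_rist hG g.1 ((rist G u).inv_mem ha)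
  have hcb : Commute c b := Subtype.ext (commute_rist hG hu (level_smul hG g.1 u) hcr hb)
  have h2 : (a * c) * (b * (a * c)⁻¹ * b⁻¹) ∈ N :=
    N.mul_mem h1 (hN.conj_mem _ (N.inv_mem h1) b)
  have e : (a * c) * (b * (a * c)⁻¹ * b⁻¹) = ⁅a, b⁆ := by
    have : c * b * c⁻¹ = b := by rw [hcb.eq, mul_inv_cancel_right]
    calc (a * c) * (b * (a * c)⁻¹ * b⁻¹) = a * (c * b * c⁻¹) * a⁻¹ * b⁻¹ := by group
      _ = ⁅a, b⁆ := by rw [this, commutatorElement_def]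
  rwa [e] at h2

lemma mem_subOrbit_self (H : Subgroup G) (v : Vertex m) : v ∈ subOrbit G H v :=
  ⟨1, H.one_mem, one_smul _ _⟩

lemma subOrbit_smul (H : Subgroup G) (v : Vertex m) {h : G} (hh : h ∈ H) :
    subOrbit G H (h • v) = subOrbit G H v := by
  ext w
  constructor
  · rintro ⟨k, hk, rfl⟩
    exact ⟨k * h, H.mul_mem hk hh, mul_smul _ _ _⟩
  · rintro ⟨k, hk, rfl⟩
    exact ⟨k * h⁻¹, H.mul_mem hk (H.inv_mem hh), by rw [mul_smul, inv_smul_smul]⟩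

lemma smul_mem_orbitsOn {H : Subgroup G} {X : Set (Vertex m)} {O : Set (Vertex m)}
    (hO : O ∈ orbitsOn G H X) {h : G} (hh : h ∈ H) {v : Vertex m} (hv : v ∈ O) :
    h • v ∈ O := by
  obtain ⟨u, -, rfl⟩ := hO
  obtain ⟨k, hk, rfl⟩ := hv
  exact ⟨h * k, H.mul_mem hh hk, mul_smul _ _ _⟩

lemma orbitsOn_eq {H : Subgroup G} {X : Set (Vertex m)} {O : Set (Vertex m)}
    (hO : O ∈ orbitsOn G H X) {v : Vertex m} (hv : v ∈ O) : O = subOrbit G H v := by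
  obtain ⟨u, -, rfl⟩ := hO
  obtain ⟨k, hk, rfl⟩ := hv
  exact (subOrbit_smul H u hk).symm

lemma orbitsOn_level (hG : IsBranchGroup m G) {H : Subgroup G} {n : ℕ} {O : Set (Vertex m)}
    (hO : O ∈ orbitsOn G H (layer m n)) {v : Vertex m} (hv : v ∈ O) : v.1 = n := by
  obtain ⟨u, hu, rfl⟩ := hO
  obtain ⟨k, hk, rfl⟩ := hv
  rw [level_smul hG]
  exact hu

instance orbits_finite (H : Subgroup G) (n : ℕ) : Finite (orbitsOn G H (layer m n)) :=
  Set.Finite.image _ (Set.toFinite (layer m n))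

lemma card_orbits_le (hm : ∀ n, 2 ≤ m n) (hG : IsBranchGroup m G) (H : Subgroup G)
    [H.FiniteIndex] (n : ℕ) : Nat.card (orbitsOn G H (layer m n)) ≤ H.index := by
  obtain ⟨v, hv⟩ := layer_nonempty hm n
  rw [Subgroup.index]
  refine Nat.card_le_card_of_surjective (fun q : G ⧸ H =>
    (⟨subOrbit G H (q.out⁻¹ • v), _, (level_smul hG _ v).trans hv, rfl⟩ :
      orbitsOn G H (layer m n))) ?_
  rintro ⟨_, w, hw, rfl⟩
  obtain ⟨g, rfl⟩ := hG.trans v w (hv.trans (Eq.symm hw))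
  refine ⟨QuotientGroup.mk g⁻¹, Subtype.ext ?_⟩
  obtain ⟨h, hh⟩ := QuotientGroup.mk_out_eq_mul H g⁻¹
  simp only
  rw [hh, mul_inv_rev, inv_inv, mul_smul]
  exact subOrbit_smul H _ (H.inv_mem h.2)

/-- Elements of `H` fixing everything in a set. -/
def fixing (H : Subgroup G) (S : Set (Vertex m)) : Subgroup H where
  carrier := {h | ∀ w ∈ S, h.1 • w = w}
  one_mem' := fun w _ => one_smul _ w
  mul_mem' := by
    intro a b ha hb w hw
    show (a.1 * b.1) • w = w
    rw [mul_smul, hb w hw, ha w hw]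
  inv_mem' := by
    intro a ha w hw
    show (a.1)⁻¹ • w = w
    rw [inv_smul_eq_iff, ha w hw]

lemma indep_lower (hm : ∀ n, 2 ≤ m n) (hG : IsBranchGroup m G) (H : Subgroup G)
    [H.FiniteIndex] (n : ℕ) :
    HasIndepFamily H (Nat.card (orbitsOn G H (layer m n))) := by
  let e := (Finite.equivFin (orbitsOn G H (layer m n))).symm
  let B : Fin (Nat.card (orbitsOn G H (layer m n))) → Set (Vertex m) :=
    fun i => {w | ∃ v ∈ (e i).1, IsPrefix v w}
  have hB : ∀ i j, i ≠ j → ∀ w, w ∈ B i → w ∉ B j := by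
    rintro i j hij w ⟨u, hu, huw⟩ ⟨v, hv, hvw⟩
    have := eq_of_common huw hvw
      ((orbitsOn_level hG (e i).2 hu).trans (orbitsOn_level hG (e j).2 hv).symm)
    subst this
    apply hij
    apply e.injective
    apply Subtype.ext
    rw [orbitsOn_eq (e i).2 hu, orbitsOn_eq (e j).2 hv]
  refine ⟨fun i => fixing H (B i)ᶜ, fun i => ⟨?_⟩, fun i => ?_, fun i => ?_⟩
  · intro x hx g w hw
    show (g.1 * x.1 * (g.1)⁻¹) • w = w
    have : (g.1)⁻¹ • w ∈ (B i)ᶜ := by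
      rintro ⟨v, hv, hvw⟩
      exact hw ⟨g.1 • v, smul_mem_orbitsOn (e i).2 g.2 hv, (prefix_smul_iff hG _).2 hvw⟩
    rw [mul_smul, mul_smul, hx _ this, smul_inv_smul]
  · obtain ⟨v, hv, hvo⟩ := (e i).2
    have hvi : v ∈ (e i).1 := by
      rw [← hvo]
      exact mem_subOrbit_self H v
    have := infinite_inf hm hG H v
    refine Infinite.of_injective (β := H.subgroupOf (rist G v))
      (fun x : H.subgroupOf (rist G v) => ⟨⟨x.1.1, x.2⟩, fun w hw => ?_⟩) ?_
    · exact mem_rist.1 x.1.2 w (fun h => hw ⟨v, hvi, h⟩)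
    · intro x y hxy
      have := congrArg (fun z => z.1.1) hxy
      exact Subtype.ext (Subtype.ext this)
  · rw [eq_bot_iff]
    rintro x ⟨hx1, hx2⟩
    have hle : (⨆ j ∈ ({i}ᶜ : Set (Fin (Nat.card (orbitsOn G H (layer m n))))),
        fixing H (B j)ᶜ) ≤ fixing H (B i) := by
      refine iSup₂_le (fun j hj => ?_)
      intro y hy w hw
      exact hy w (hB i j (fun h => hj h.symm) w hw)
    have hx3 := hle hx2
    rw [Subgroup.mem_bot]
    apply Subtype.ext
    apply hG.faithful
    intro w
    by_cases hw : w ∈ B i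
    · exact hx3 w hw
    · exact hx1 w hw

lemma indep_upper (hm : ∀ n, 2 ≤ m n) (hG : IsBranchGroup m G) (H : Subgroup G)
    [H.FiniteIndex] {r : ℕ} (hr : HasIndepFamily H r) :
    ∃ n, r ≤ Nat.card (orbitsOn G H (layer m n)) := by
  obtain ⟨N, hN, hinf, hind⟩ := hr
  have h1 : ∀ i, ∃ g : H, g ∈ N i ∧ ∃ u : Vertex m, g.1 • u ≠ u := by
    intro i
    have := hinf i
    obtain ⟨x, hx⟩ := exists_ne (1 : N i)
    refine ⟨x.1, x.2, exists_moved hG (fun h => hx ?_)⟩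
    exact Subtype.ext (Subtype.ext h)
  choose g hg u hu using h1
  let n := Finset.univ.sup (fun i => (u i).1)
  have hn : ∀ i, (u i).1 ≤ n := fun i =>
    Finset.le_sup (f := fun i => (u i).1) (Finset.mem_univ i)
  choose w hw huw using fun i => exists_ext hm (u i) (hn i)
  refine ⟨n, ?_⟩
  have hinj : Function.Injective (fun i : Fin r =>
      (⟨subOrbit G H (w i), w i, hw i, rfl⟩ : orbitsOn G H (layer m n))) := by
    intro i j hij
    by_contra hne
    have hmem : w i ∈ subOrbit G H (w j) := by
      have : subOrbit G H (w i) = subOrbit G H (w j) := congrArg Subtype.val hij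
      rw [← this]
      exact mem_subOrbit_self H _
    obtain ⟨h, hh, hwij⟩ := hmem
    obtain ⟨a, b, haH, hbH, ha, hb, hab⟩ := exists_noncomm hm hG H (w j)
    have hj : ∀ a b : H, a.1 ∈ rist G (w j) → b.1 ∈ rist G (w j) → ⁅a, b⁆ ∈ N j :=
      fun a b ha hb => key hG H (N j) (hN j) (g j) (hg j) (u j) (hu j) a b
        (rist_mono (huw j) ha) (rist_mono (huw j) hb)
    have hi : ∀ a b : H, a.1 ∈ rist G (w j) → b.1 ∈ rist G (w j) → ⁅a, b⁆ ∈ N i := by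
      intro a b ha hb
      let k : H := ⟨h, hh⟩
      have ha' : (k * a * k⁻¹).1 ∈ rist G (w i) := by
        rw [← hwij]
        exact conj_mem_rist hG h ha
      have hb' : (k * b * k⁻¹).1 ∈ rist G (w i) := by
        rw [← hwij]
        exact conj_mem_rist hG h hb
      have h3 := key hG H (N i) (hN i) (g i) (hg i) (u i) (hu i) _ _
        (rist_mono (huw i) ha') (rist_mono (huw i) hb')
      have h4 := (hN i).conj_mem _ h3 k⁻¹
      have h5 : k⁻¹ * ⁅k * a * k⁻¹, k * b * k⁻¹⁆ * k⁻¹⁻¹ = ⁅a, b⁆ := by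
        simp only [commutatorElement_def]
        group
      rwa [h5] at h4
    have hjs : ⁅(⟨a, haH⟩ : H), ⟨b, hbH⟩⁆ ∈ ⨆ l ∈ ({i}ᶜ : Set (Fin r)), N l :=
      (le_iSup₂ (f := fun l (_ : l ∈ ({i}ᶜ : Set (Fin r))) => N l) j
        (fun h => hne h.symm)) (hj _ _ ha hb)
    have hbot : ⁅(⟨a, haH⟩ : H), ⟨b, hbH⟩⁆ ∈ (⊥ : Subgroup H) := by
      rw [← hind i]
      exact ⟨hi _ _ ha hb, hjs⟩
    rw [Subgroup.mem_bot, commutatorElement_eq_one_iff_commute] at hbot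
    exact hab (congrArg Subtype.val hbot.eq)
  simpa using Nat.card_le_card_of_injective _ hinj

end BranchAux

/-- **Corollary.** Let `G` be a branch group on `T` and `H ≤ G` of finite index.  Then
`b(H)` is finite and is the maximum number of `H`-orbits on any layer of `T`; in
particular `b(H) ≤ |G:H|`. -/
theorem b_eq_max_orbits
    (m : ℕ → ℕ) (hm : ∀ n, 2 ≤ m n)
    (G : Type*) [Group G] [MulAction G (Vertex m)] (hG : IsBranchGroup m G)
    (H : Subgroup G) [H.FiniteIndex] :
    ∃ b : ℕ, IsGreatest {r : ℕ | HasIndepFamily ↥H r} b ∧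
      IsGreatest {k : ℕ | ∃ n : ℕ, k = Nat.card (orbitsOn G H (layer m n))} b ∧
      b ≤ H.index := by
  set S : Set ℕ := {k : ℕ | ∃ n : ℕ, k = Nat.card (orbitsOn G H (layer m n))} with hS
  have hbdd : ∀ k ∈ S, k ≤ H.index := by
    rintro k ⟨n, rfl⟩
    exact BranchAux.card_orbits_le hm hG H n
  have hba : BddAbove S := ⟨H.index, hbdd⟩
  have hmem : sSup S ∈ S := Nat.sSup_mem ⟨_, 0, rfl⟩ hba
  refine ⟨sSup S, ⟨?_, ?_⟩, ⟨hmem, fun k hk => le_csSup hba hk⟩, hbdd _ hmem⟩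
  · obtain ⟨n, hn⟩ := hmem
    rw [hn]
    exact BranchAux.indep_lower hm hG H n
  · intro r hr
    obtain ⟨n, hn⟩ := BranchAux.indep_upper hm hG H hr
    exact hn.trans (le_csSup hba ⟨n, rfl⟩)
end

section
/- Let p be a prime, let T be the p-ary rooted tree, and let H be a group of automorphisms of T that acts on each layer L_n as a p-group (i.e. the image of H in the symmetric group on L_n is a finite p-group). Then for every n the number of H-orbits on L_n is congruent to 1 modulo p−1. Moreover, if in addition H is a subgroup of finite index in a branch group on T, then b(H) ≡ 1 (mod p−1). -/
/-!  Common definitions: rooted trees of type `(m n)`, tree automorphisms,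
rigid stabilizers, branch groups, and auxiliary notions. -/

universe u

namespace OMP

variable {m : ℕ → ℕ}

theorem prefix_eq {v w : Vertex m} (h : Vertex.IsPrefix v w) (e : v.1 = w.1) : v = w := by
  obtain ⟨n, f⟩ := v
  obtain ⟨k, g⟩ := w
  obtain ⟨h1, h2⟩ := h
  simp only at e
  subst e
  congr 1
  funext i
  exact (h2 i).symm

theorem prefix_refl (v : Vertex m) : Vertex.IsPrefix v v := ⟨le_rfl, fun _ => rfl⟩

theorem prefix_trans {u v w : Vertex m} (h : Vertex.IsPrefix u v) (h' : Vertex.IsPrefix v w) :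
    Vertex.IsPrefix u w := by
  obtain ⟨h1, h2⟩ := h
  obtain ⟨h3, h4⟩ := h'
  refine ⟨h1.trans h3, fun i => ?_⟩
  rw [← h2 i, ← h4 (Fin.castLE h1 i)]
  rfl

theorem prefix_unique {u v w : Vertex m} (h : Vertex.IsPrefix u w) (h' : Vertex.IsPrefix v w)
    (e : u.1 = v.1) : u = v := by
  obtain ⟨n, f⟩ := u
  obtain ⟨k, g⟩ := v
  obtain ⟨h1, h2⟩ := h
  obtain ⟨h3, h4⟩ := h'
  simp only at e
  subst e
  congr 1
  funext i
  exact (h2 i).symm.trans (h4 i)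

theorem exists_parent {w : Vertex m} {n : ℕ} (h : w.1 = n + 1) :
    ∃ u : Vertex m, u.1 = n ∧ Vertex.IsChild u w ∧
      ∀ v : Vertex m, Vertex.IsPrefix v w → v.1 ≤ n → Vertex.IsPrefix v u := by
  obtain ⟨k, g⟩ := w
  simp only at h
  subst h
  refine ⟨⟨n, fun i => g i.castSucc⟩, rfl, ⟨rfl, Nat.le_succ n, fun i => rfl⟩, ?_⟩
  rintro v ⟨h1, h2⟩ hv
  exact ⟨hv, fun i => h2 i⟩

theorem exists_ext (hm : ∀ i, 0 < m i) (v : Vertex m) (n : ℕ) (h : v.1 ≤ n) :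
    ∃ w : Vertex m, w.1 = n ∧ Vertex.IsPrefix v w := by
  refine ⟨⟨n, fun i => if hi : i.1 < v.1 then v.2 ⟨i.1, hi⟩ else ⟨0, hm _⟩⟩, rfl, h, fun i => ?_⟩
  simp

section act
variable {Γ : Type*} [Group Γ] [MulAction Γ (Vertex m)]

def IsAut (m : ℕ → ℕ) (Γ : Type*) [Group Γ] [MulAction Γ (Vertex m)] : Prop :=
  ∀ (g : Γ) (v w : Vertex m), Vertex.IsChild v w ↔ Vertex.IsChild (g • v) (g • w)

def IsFaith (m : ℕ → ℕ) (Γ : Type*) [Group Γ] [MulAction Γ (Vertex m)] : Prop :=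
  ∀ g : Γ, (∀ v : Vertex m, g • v = v) → g = 1

theorem level_smul (ha : IsAut m Γ) (g : Γ) : ∀ (n : ℕ) (v : Vertex m), v.1 = n → (g • v).1 = n
  | 0, v, h => by
    by_contra hne
    obtain ⟨k, hk⟩ := Nat.exists_eq_succ_of_ne_zero hne
    obtain ⟨u, -, hu, -⟩ := exists_parent hk
    have := (ha g⁻¹ _ _).1 hu
    rw [inv_smul_smul] at this
    have := this.1
    omega
  | n+1, v, h => by
    obtain ⟨u, hu1, hu, -⟩ := exists_parent h
    have h2 := ((ha g _ _).1 hu).1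
    rw [level_smul ha g n u hu1] at h2
    exact h2

theorem prefix_smul (ha : IsAut m Γ) (g : Γ) (v : Vertex m) :
    ∀ (k : ℕ) (w : Vertex m), w.1 = v.1 + k → Vertex.IsPrefix v w →
      Vertex.IsPrefix (g • v) (g • w)
  | 0, w, h, hp => by
    rw [prefix_eq hp h.symm]
    exact prefix_refl _
  | k+1, w, h, hp => by
    obtain ⟨u, hu1, hu, hu2⟩ := exists_parent (w := w) (n := v.1 + k) h
    exact prefix_trans (prefix_smul ha g v k u hu1 (hu2 v hp (by omega))) ((ha g _ _).1 hu).2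

theorem prefix_smul' (ha : IsAut m Γ) (g : Γ) {v w : Vertex m} (h : Vertex.IsPrefix v w) :
    Vertex.IsPrefix (g • v) (g • w) := by
  obtain ⟨k, hk⟩ := Nat.exists_eq_add_of_le h.1
  exact prefix_smul ha g v k w hk h

theorem mem_rist {v : Vertex m} {g : Γ} :
    g ∈ rist Γ v ↔ ∀ w, ¬ Vertex.IsPrefix v w → g • w = w := by
  simp [rist, Subgroup.mem_iInf, MulAction.mem_stabilizer_iff]

theorem conj_rist (ha : IsAut m Γ) {v : Vertex m} {g : Γ} (hg : g ∈ rist Γ v) (k : Γ) :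
    k * g * k⁻¹ ∈ rist Γ (k • v) := by
  rw [mem_rist] at *
  intro w hw
  rw [mul_smul, mul_smul, hg, smul_inv_smul]
  intro h
  apply hw
  have := prefix_smul' ha k h
  rwa [smul_inv_smul] at this

theorem rist_disj (hf : IsFaith m Γ) {v w : Vertex m} (h : v.1 = w.1) (hne : v ≠ w) {g : Γ}
    (h1 : g ∈ rist Γ v) (h2 : g ∈ rist Γ w) : g = 1 := by
  rw [mem_rist] at *
  apply hf
  intro u
  by_cases hu : Vertex.IsPrefix v u
  · exact h2 u fun h' => hne (prefix_unique hu h' h)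
  · exact h1 u hu

theorem rist_comm (ha : IsAut m Γ) (hf : IsFaith m Γ) {v w : Vertex m} (h : v.1 = w.1)
    (hne : v ≠ w) {a b : Γ} (h1 : a ∈ rist Γ v) (h2 : b ∈ rist Γ w) : a * b = b * a := by
  have haw : a • w = w := mem_rist.1 h1 w fun h' => hne (prefix_eq h' h)
  have hbv : b • v = v := mem_rist.1 h2 v fun h' => hne (prefix_eq h' h.symm).symm
  have e1 : a * b * a⁻¹ ∈ rist Γ w := by
    have := conj_rist ha h2 a
    rwa [haw] at this
  have e2 : b * a⁻¹ * b⁻¹ ∈ rist Γ v := by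
    have := conj_rist ha (inv_mem h1) b
    rwa [hbv] at this
  have := rist_disj hf h hne (g := a * b * a⁻¹ * b⁻¹)
    (by have := mul_mem h1 e2; simpa [mul_assoc] using this) (mul_mem e1 (inv_mem h2))
  rw [mul_inv_eq_one, mul_inv_eq_iff_eq_mul] at this
  exact this

theorem rist_mono {v w : Vertex m} (h : Vertex.IsPrefix v w) : rist Γ w ≤ rist Γ v := by
  intro g hg
  rw [mem_rist] at *
  exact fun u hu => hg u fun h' => hu (prefix_trans h h')

/-- noncommutativity of rigid stabilizers -/
theorem rist_nonab (ha : IsAut m Γ) (hf : IsFaith m Γ) (hnt : ∀ v : Vertex m, ∃ g ∈ rist Γ v, g ≠ 1)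
    (v : Vertex m) : ∃ a ∈ rist Γ v, ∃ b ∈ rist Γ v, a * b * a⁻¹ * b⁻¹ ≠ 1 := by
  obtain ⟨x, hx, hx1⟩ := hnt v
  have : ∃ w : Vertex m, x • w ≠ w := by
    by_contra! h
    exact hx1 (hf x h)
  obtain ⟨w, hw⟩ := this
  have hvw : Vertex.IsPrefix v w := by
    by_contra h
    exact hw (mem_rist.1 hx w h)
  obtain ⟨y, hy, hy1⟩ := hnt w
  refine ⟨x, hx, y, rist_mono hvw hy, fun h => ?_⟩
  rw [mul_inv_eq_one] at h
  have h2 := conj_rist ha hy x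
  rw [h] at h2
  exact hy1 (rist_disj hf (level_smul ha x _ w rfl) hw h2 hy)

theorem comm_mem (ha : IsAut m Γ) (hf : IsFaith m Γ) (K : Subgroup Γ) (hK : K.Normal)
    {v : Vertex m} {k a b : Γ} (hk : k ∈ K) (hkv : k • v ≠ v) (haa : a ∈ rist Γ v)
    (hb : b ∈ rist Γ v) : a * b * a⁻¹ * b⁻¹ ∈ K := by
  have hc := conj_rist ha (inv_mem haa) k
  have hcomm := rist_comm ha hf (level_smul ha k _ v rfl) hkv hc hb
  have hd : a * (k * a⁻¹ * k⁻¹) ∈ K := by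
    have := mul_mem (hK.conj_mem k hk a) (inv_mem hk)
    simpa [mul_assoc] using this
  have h2 := mul_mem hd (hK.conj_mem _ (inv_mem hd) b)
  generalize k * a⁻¹ * k⁻¹ = c at *
  convert h2 using 1
  have : b = c * b * c⁻¹ := by rw [hcomm]; group
  calc a * b * a⁻¹ * b⁻¹ = a * (c * b * c⁻¹) * a⁻¹ * b⁻¹ := by rw [← this]
    _ = _ := by group

/-- upper bound -/
theorem upper (hm : ∀ i, 0 < m i) (ha : IsAut m Γ) (hf : IsFaith m Γ)
    (hnt : ∀ v : Vertex m, ∃ g ∈ rist Γ v, g ≠ 1) (r : ℕ) (h : HasIndepFamily Γ r) :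
    ∃ (n : ℕ) (v : Fin r → Vertex m), (∀ i, (v i).1 = n) ∧
      ∀ i j, (∃ g : Γ, g • v i = v j) → i = j := by
  obtain ⟨N, hN, hinf, hind⟩ := h
  have h1 : ∀ i, ∃ k ∈ N i, ∃ w : Vertex m, k • w ≠ w := by
    intro i
    obtain ⟨k, hk⟩ := exists_ne (1 : N i)
    refine ⟨k, k.2, ?_⟩
    by_contra! h
    exact hk (Subtype.ext (hf _ h))
  choose k hk w hw using h1
  obtain ⟨n, hn⟩ : ∃ n, ∀ i, (w i).1 ≤ n :=
    ⟨Finset.univ.sup fun i => (w i).1, fun i => Finset.le_sup (f := fun i => (w i).1) (Finset.mem_univ i)⟩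
  choose v hv hwv using fun i => exists_ext hm (w i) n (hn i)
  have hkv : ∀ i, k i • v i ≠ v i := by
    intro i h
    apply hw i
    have := prefix_smul' ha (k i) (hwv i)
    rw [h] at this
    exact prefix_unique this (hwv i) (level_smul ha _ _ _ rfl)
  refine ⟨n, v, hv, ?_⟩
  rintro i j ⟨g, hg⟩
  by_contra hij
  obtain ⟨a, haa, b, hb, hab⟩ := rist_nonab ha hf hnt (v j)
  apply hab
  have hi := comm_mem ha hf (N i) (hN i) (k := g * k i * g⁻¹) ((hN i).conj_mem _ (hk i) g)
    (v := v j) (by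
      rw [← hg, mul_smul, mul_smul, inv_smul_smul]
      exact fun h => hkv i (smul_left_cancel _ h)) haa hb
  have hj := comm_mem ha hf (N j) (hN j) (hk j) (hkv j) haa hb
  have hj' : N j ≤ ⨆ j ∈ ({i}ᶜ : Set (Fin r)), N j :=
    le_iSup₂_of_le j (by simpa using Ne.symm hij) le_rfl
  have : a * b * a⁻¹ * b⁻¹ ∈ N i ⊓ (⨆ j ∈ ({i}ᶜ : Set (Fin r)), N j) := ⟨hi, hj' hj⟩
  rw [hind i] at this
  simpa using this

/-- lower bound -/
theorem lower (ha : IsAut m Γ) (hf : IsFaith m Γ)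
    (hinf : ∀ v : Vertex m, Infinite (rist Γ v)) (n r : ℕ) (O : Fin r → Set (Vertex m))
    (hO : ∀ i, (O i).Nonempty) (hOn : ∀ i, ∀ v ∈ O i, v.1 = n)
    (hOg : ∀ i, ∀ v ∈ O i, ∀ g : Γ, g • v ∈ O i)
    (hdis : ∀ i j v, v ∈ O i → v ∈ O j → i = j) : HasIndepFamily Γ r := by
  refine ⟨fun i => ristSet Γ (O i), ?_, ?_, ?_⟩
  · intro i
    constructor
    intro x hx g
    have : ristSet Γ (O i) ≤ (ristSet Γ (O i)).comap (MulAut.conj g).toMonoidHom := by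
      conv_lhs => rw [ristSet]
      refine iSup₂_le fun v hv y hy => ?_
      have h1 : rist Γ (g • v) ≤ ristSet Γ (O i) := le_iSup₂_of_le (g • v) (hOg i v hv g) le_rfl
      exact h1 (conj_rist ha hy g)
    exact this hx
  · intro i
    obtain ⟨v, hv⟩ := hO i
    have h1 : rist Γ v ≤ ristSet Γ (O i) := le_iSup₂_of_le v hv le_rfl
    have := hinf v
    exact Infinite.of_injective _ (Subgroup.inclusion_injective h1)
  · intro i
    rw [eq_bot_iff]
    rintro g ⟨h1, h2⟩
    refine Subgroup.mem_bot.2 (hf g fun u => ?_)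
    by_cases hu : ∃ v ∈ O i, Vertex.IsPrefix v u
    · obtain ⟨v, hv, hvu⟩ := hu
      have : (⨆ j ∈ ({i}ᶜ : Set (Fin r)), ristSet Γ (O j)) ≤ MulAction.stabilizer Γ u := by
        refine iSup₂_le fun j hj => iSup₂_le fun w hw x hx => ?_
        refine mem_rist.1 hx u fun h => hj ?_
        have := prefix_unique h hvu ((hOn j w hw).trans (hOn i v hv).symm)
        subst this
        exact hdis _ _ _ hw hv
      exact this h2
    · have : ristSet Γ (O i) ≤ MulAction.stabilizer Γ u :=
        iSup₂_le fun w hw x hx => mem_rist.1 hx u fun h => hu ⟨w, hw, h⟩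
      exact this h1

end act

theorem layer_equiv (p n : ℕ) : Nonempty (layer (fun _ => p) n ≃ (Fin n → Fin p)) := by
  refine ⟨⟨fun v => v.2 ▸ v.1.2, fun f => ⟨⟨n, f⟩, rfl⟩, ?_, fun f => rfl⟩⟩
  rintro ⟨⟨k, f⟩, hk⟩
  cases hk
  rfl

theorem card_layer (p n : ℕ) : Nat.card (layer (fun _ => p) n) = p ^ n := by
  rw [Nat.card_congr (layer_equiv p n).some]; simp

instance fin_layer (p n : ℕ) : Finite (layer (fun _ => p) n) :=
  Finite.of_equiv _ (layer_equiv p n).some.symm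

theorem rist_infinite (p : ℕ) (hp : 2 ≤ p) (G : Type*) [Group G] [MulAction G (Vertex (fun _ => p))]
    (hB : IsBranchGroup (fun _ => p) G) (v : Vertex (fun _ => p)) : Infinite (rist G v) := by
  by_contra hfin
  rw [not_infinite_iff_finite] at hfin
  have ha : IsAut (fun _ => p) G := hB.aut
  have hf : IsFaith (fun _ => p) G := hB.faithful
  have hall : ∀ w : layer (fun _ => p) v.1, Finite (rist G w.1) := by
    intro w
    obtain ⟨g, hg⟩ := hB.trans w.1 v w.2
    refine Finite.of_injective (fun x : rist G w.1 => (⟨g * x * g⁻¹, by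
      have := conj_rist ha x.2 g
      rwa [hg] at this⟩ : rist G v)) ?_
    intro x y h
    have h2 : g * x.1 * g⁻¹ = g * y.1 * g⁻¹ := congrArg Subtype.val h
    exact Subtype.ext (mul_left_cancel (mul_right_cancel h2))
  have hcomm : Pairwise fun i j : layer (fun _ => p) v.1 =>
      ∀ x y : G, x ∈ rist G i.1 → y ∈ rist G j.1 → Commute x y := by
    intro i j hij x y hx hy
    exact rist_comm ha hf (i.2.trans j.2.symm) (fun h => hij (Subtype.ext h)) hx hy
  have : Fintype (layer (fun _ => p) v.1) := Fintype.ofFinite _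
  have hr : ristLayer (fun _ => p) G v.1 = (Subgroup.noncommPiCoprod hcomm).range := by
    rw [Subgroup.noncommPiCoprod_range, ristLayer, ristSet, iSup_subtype']
  have hfinL : Finite (ristLayer (fun _ => p) G v.1) := by
    rw [hr]
    exact Set.finite_range _
  have := hB.ristFiniteIndex v.1
  have hG : Finite G := Finite.of_equiv _ (Subgroup.groupEquivQuotientProdSubgroup
    (s := ristLayer (fun _ => p) G v.1)).symm
  have hle : Nat.card (layer (fun _ => p) (Nat.card G)) ≤ Nat.card G := by
    have v0 : layer (fun _ => p) (Nat.card G) := ⟨⟨Nat.card G, fun _ => (⟨0, Nat.lt_of_lt_of_le Nat.zero_lt_two hp⟩ : Fin p)⟩, rfl⟩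
    choose f hf using fun w : layer (fun _ => p) (Nat.card G) =>
      hB.trans v0.1 w.1 (v0.2.trans w.2.symm)
    refine Nat.card_le_card_of_injective f fun x y h => Subtype.ext ?_
    rw [← hf x, ← hf y, h]
  rw [card_layer] at hle
  exact absurd hle (not_le.2 (Nat.lt_pow_self (by omega)))

theorem rist_infinite_sub (p : ℕ) (hp : 2 ≤ p) (G : Type*) [Group G]
    [MulAction G (Vertex (fun _ => p))]
    (hB : IsBranchGroup (fun _ => p) G) (H : Subgroup G) [H.FiniteIndex]
    (v : Vertex (fun _ => p)) : Infinite (rist H v) := by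
  by_contra hfin
  rw [not_infinite_iff_finite] at hfin
  have := rist_infinite p hp G hB v
  have h1 : Finite (H.subgroupOf (rist G v)) := by
    refine Finite.of_injective (fun x : H.subgroupOf (rist G v) =>
      (⟨⟨x.1.1, x.2⟩, mem_rist.2 fun w hw => mem_rist.1 x.1.2 w hw⟩ : rist H v)) ?_
    intro x y h
    exact Subtype.ext (Subtype.ext (congrArg (fun z => z.1.1) h))
  have : Finite (rist G v) := Finite.of_equiv _ (Subgroup.groupEquivQuotientProdSubgroup
    (s := H.subgroupOf (rist G v))).symm
  exact not_finite (rist G v)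

theorem subOrbit_eq_iff {m : ℕ → ℕ} {G : Type*} [Group G] [MulAction G (Vertex m)] (H : Subgroup G)
    (v w : Vertex m) : subOrbit G H v = subOrbit G H w ↔ ∃ h ∈ H, h • w = v := by
  constructor
  · intro h
    have : v ∈ subOrbit G H v := ⟨1, H.one_mem, one_smul _ _⟩
    rw [h] at this
    exact this
  · rintro ⟨h, hh, rfl⟩
    ext u
    constructor
    · rintro ⟨k, hk, rfl⟩
      exact ⟨k * h, H.mul_mem hk hh, mul_smul _ _ _⟩
    · rintro ⟨k, hk, rfl⟩
      exact ⟨k * h⁻¹, H.mul_mem hk (H.inv_mem hh), by rw [mul_smul, inv_smul_smul]⟩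

theorem part1 (p : ℕ) (hp : p.Prime)
    (G : Type*) [Group G] [MulAction G (Vertex (fun _ => p))]
    (ha : IsAut (fun _ => p) G) (H : Subgroup G)
    (hpgrp : ∀ (n : ℕ), ∀ h ∈ H, ∃ e : ℕ,
      ∀ v : Vertex (fun _ => p), v.1 = n → (h ^ p ^ e) • v = v) (n : ℕ) :
    Nat.card (orbitsOn G H (layer (fun _ => p) n)) ≡ 1 [MOD p - 1] := by
  have hpow : ∀ k, p ^ k ≡ 1 [MOD p - 1] := by
    intro k
    have h1 : p ≡ 1 [MOD p - 1] := by
      have := (Nat.modEq_iff_dvd' hp.one_le (n := p - 1)).2 dvd_rfl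
      exact this.symm
    simpa using h1.pow k
  letI act : MulAction H (layer (fun _ => p) n) :=
    { smul := fun h v => ⟨h.1 • v.1, level_smul ha h.1 n v.1 v.2⟩
      one_smul := fun v => Subtype.ext (one_smul G v.1)
      mul_smul := fun g h v => Subtype.ext (mul_smul g.1 h.1 v.1) }
  have hact : ∀ (h : H) (v : layer (fun _ => p) n), (h • v).1 = h.1 • v.1 := fun _ _ => rfl
  let Q := (MulAction.toPermHom H (layer (fun _ => p) n)).range
  have hQ : IsPGroup p Q := by
    rintro ⟨_, h, rfl⟩
    obtain ⟨e, he⟩ := hpgrp n h.1 h.2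
    refine ⟨e, Subtype.ext ?_⟩
    change (MulAction.toPermHom H (layer (fun _ => p) n) h) ^ p ^ e = 1
    rw [← map_pow]
    ext1 v
    refine Subtype.ext ?_
    exact he v.1 v.2
  have hQm : ∀ (v w : layer (fun _ => p) n), w ∈ MulAction.orbit Q v ↔
      subOrbit G H w.1 = subOrbit G H v.1 := by
    intro v w
    rw [subOrbit_eq_iff]
    constructor
    · rintro ⟨⟨_, h, rfl⟩, rfl⟩
      exact ⟨h.1, h.2, rfl⟩
    · rintro ⟨h, hh, e⟩
      exact ⟨⟨_, ⟨h, hh⟩, rfl⟩, Subtype.ext e⟩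
  let f : layer (fun _ => p) n → orbitsOn G H (layer (fun _ => p) n) :=
    fun v => ⟨subOrbit G H v.1, v.1, v.2, rfl⟩
  have hfs : Function.Surjective f := by
    rintro ⟨_, v, hv, rfl⟩
    exact ⟨⟨v, hv⟩, rfl⟩
  have hfin : Finite (orbitsOn G H (layer (fun _ => p) n)) := Finite.of_surjective f hfs
  have := Fintype.ofFinite (orbitsOn G H (layer (fun _ => p) n))
  have hc := Nat.card_congr (Equiv.sigmaFiberEquiv f)
  rw [Nat.card_sigma, card_layer] at hc
  have hfib : ∀ y, Nat.card {x // f x = y} ≡ 1 [MOD p - 1] := by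
    intro y
    obtain ⟨v, rfl⟩ := hfs y
    have : {x | f x = f v} = MulAction.orbit Q v := by
      ext w
      rw [hQm]
      exact Subtype.ext_iff
    have hh : Nat.card {x // f x = f v} = Nat.card (MulAction.orbit Q v) := by
      rw [← this]; rfl
    haveI : Fact p.Prime := ⟨hp⟩
    obtain ⟨k, hk⟩ := hQ.card_orbit v
    rw [hh, hk]
    exact hpow k
  have hs : ∑ y, Nat.card {x // f x = y} ≡ ∑ y : orbitsOn G H (layer (fun _ => p) n), 1 [MOD p - 1] :=
    Nat.ModEq.sum fun y _ => hfib y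
  rw [hc] at hs
  simp only [Finset.sum_const, Finset.card_univ, smul_eq_mul, mul_one] at hs
  rw [Nat.card_eq_fintype_card]
  exact hs.symm.trans (hpow n)

end OMP

/-- **Lemma.** Let `T` be the `p`-ary tree (`p` prime) and let `H` be a group of
automorphisms of `T` acting on each layer as a `p`-group (every element of the image
in the symmetric group of each layer has `p`-power order).  Then the number of
`H`-orbits on each layer is `≡ 1 (mod p-1)`.  If moreover `H` has finite index in a
branch group `G` on `T`, then `b(H) ≡ 1 (mod p-1)`. -/
theorem orbits_mod_p_sub_one
    (p : ℕ) (hp : p.Prime)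
    (G : Type*) [Group G] [MulAction G (Vertex (fun _ => p))]
    (hfaith : ∀ g : G, (∀ v : Vertex (fun _ => p), g • v = v) → g = 1)
    (haut : ∀ (g : G) (v w : Vertex (fun _ => p)),
      Vertex.IsChild v w ↔ Vertex.IsChild (g • v) (g • w))
    (H : Subgroup G)
    (hpgrp : ∀ (n : ℕ), ∀ h ∈ H, ∃ e : ℕ,
      ∀ v : Vertex (fun _ => p), v.1 = n → (h ^ p ^ e) • v = v) :
    (∀ n : ℕ, Nat.card (orbitsOn G H (layer (fun _ => p) n)) ≡ 1 [MOD p - 1]) ∧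
    (IsBranchGroup (fun _ => p) G → H.FiniteIndex →
      ∀ b : ℕ, IsGreatest {r : ℕ | HasIndepFamily ↥H r} b → b ≡ 1 [MOD p - 1]) := by
  have ha : OMP.IsAut (fun _ => p) G := haut
  have haH : OMP.IsAut (fun _ => p) H := fun g v w => haut g.1 v w
  have hfH : OMP.IsFaith (fun _ => p) H := fun g h => Subtype.ext (hfaith g.1 h)
  have h1 := OMP.part1 p hp G ha H hpgrp
  refine ⟨h1, ?_⟩
  intro hB hfi b hb
  have hinf := OMP.rist_infinite_sub p hp.two_le G hB H
  have hnt : ∀ v : Vertex (fun _ => p), ∃ g ∈ rist H v, g ≠ 1 := by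
    intro v
    have := hinf v
    obtain ⟨g, hg⟩ := exists_ne (1 : rist H v)
    exact ⟨g.1, g.2, fun h => hg (Subtype.ext h)⟩
  obtain ⟨n, v, hv, hinj⟩ := OMP.upper (fun _ => hp.pos) haH hfH hnt b hb.1
  have hfin : Finite (orbitsOn G H (layer (fun _ => p) n)) :=
    Set.Finite.to_subtype (Set.Finite.image _ (Set.toFinite _))
  have hle : b ≤ Nat.card (orbitsOn G H (layer (fun _ => p) n)) := by
    have := Nat.card_le_card_of_injective
      (fun i : Fin b => (⟨subOrbit G H (v i), v i, hv i, rfl⟩ :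
        orbitsOn G H (layer (fun _ => p) n))) (by
          intro i j h
          replace h := congrArg Subtype.val h
          obtain ⟨g, hg, e⟩ := (OMP.subOrbit_eq_iff H _ _).1 h
          exact (hinj j i ⟨⟨g, hg⟩, e⟩).symm)
    simpa using this
  have hge : Nat.card (orbitsOn G H (layer (fun _ => p) n)) ≤ b := by
    apply hb.2
    let e := (Finite.equivFin (orbitsOn G H (layer (fun _ => p) n))).symm
    have hex : ∀ i, ∃ u : Vertex (fun _ => p), u.1 = n ∧ (e i).1 = subOrbit G H u := by
      intro i
      obtain ⟨u, hu, hu'⟩ := (e i).2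
      exact ⟨u, hu, hu'.symm⟩
    refine OMP.lower haH hfH hinf n _ (fun i => (e i).1) ?_ ?_ ?_ ?_
    · intro i
      obtain ⟨u, hu, hu'⟩ := hex i
      simp only [hu']
      exact ⟨u, 1, H.one_mem, one_smul _ _⟩
    · intro i w hw
      obtain ⟨u, hu, hu'⟩ := hex i
      simp only [hu'] at hw
      obtain ⟨g, hg, rfl⟩ := hw
      exact OMP.level_smul ha g n u hu
    · intro i w hw k
      obtain ⟨u, hu, hu'⟩ := hex i
      simp only [hu'] at hw ⊢
      obtain ⟨g, hg, rfl⟩ := hw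
      exact ⟨k.1 * g, H.mul_mem k.2 hg, mul_smul _ _ _⟩
    · intro i j w hi hj
      obtain ⟨u, hu, hu'⟩ := hex i
      obtain ⟨u2, hu2, hu2'⟩ := hex j
      simp only [hu', hu2'] at hi hj
      apply e.injective
      apply Subtype.ext
      rw [hu', hu2']
      exact ((OMP.subOrbit_eq_iff H _ _).2 hi).symm.trans ((OMP.subOrbit_eq_iff H _ _).2 hj)
  rw [le_antisymm hle hge]
  exact h1 n
end

section
/- Let 𝔠 be the class of all groups G with no non-trivial abelian normal subgroups and with b(G) finite. Let H_1,…,H_n be groups in 𝔠 and let H be a subgroup of finite index in the direct product D = H_1 × ⋯ × H_n such that each projection ρ_j : H → H_j is surjective. Then b(H) = b(H_1) + ⋯ + b(H_n). -/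
/-!  Common definitions: rooted trees of type `(m n)`, tree automorphisms,
rigid stabilizers, branch groups, and auxiliary notions. -/

universe u

lemma hasIndep_of {Γ : Type*} [Group Γ] {ι : Type*} [Fintype ι] (N : ι → Subgroup Γ)
    (h1 : ∀ i, (N i).Normal) (h2 : ∀ i, Infinite ↥(N i)) (h3 : iSupIndep N) :
    HasIndepFamily Γ (Fintype.card ι) := by
  let e := (Fintype.equivFin ι).symm
  refine ⟨N ∘ e, fun i => h1 _, fun i => h2 _, fun i => ?_⟩
  exact ((h3.comp e.injective) i).eq_bot

lemma indep_map {A C : Type*} [Group A] [Group C] (f : A →* C) (hf : Function.Injective f)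
    {ι : Type*} (M : ι → Subgroup A) (h : iSupIndep M) : iSupIndep (fun i => (M i).map f) := by
  intro i
  have := Subgroup.disjoint_map hf (h i)
  simpa only [Subgroup.map_iSup] using this

lemma indep_comap {A C : Type*} [Group A] [Group C] (f : A →* C) (hf : Function.Injective f)
    {ι : Type*} (M : ι → Subgroup C) (h : iSupIndep M) :
    iSupIndep (fun i => (M i).comap f) := by
  intro i
  rw [Subgroup.disjoint_def]
  intro x hx hx'
  apply hf
  rw [map_one]
  refine (Subgroup.disjoint_def.1 (h i)) hx ?_
  have h1 := Subgroup.mem_map_of_mem f hx'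
  simp only [Subgroup.map_iSup] at h1
  exact (iSup₂_mono fun j _ => Subgroup.map_comap_le f (M j)) h1

lemma infinite_inf {A : Type*} [Group A] (P K : Subgroup A) [K.FiniteIndex] (hP : Infinite P) :
    Infinite ↥(P ⊓ K) := by
  by_contra hcon
  rw [not_infinite_iff_finite] at hcon
  have h1 : Finite (K.subgroupOf P) := by
    refine Finite.of_injective
      (fun x : K.subgroupOf P => (⟨(x : P), ⟨(x : P).2, x.2⟩⟩ : ↥(P ⊓ K))) ?_
    intro x y hxy
    exact Subtype.ext (Subtype.ext (congrArg (fun z : ↥(P ⊓ K) => (z : A)) hxy))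
  have h2 := (K.subgroupOf P).card_mul_index
  have h3 : (K.subgroupOf P).index ≠ 0 := Subgroup.FiniteIndex.index_ne_zero
  have h4 : Nat.card (K.subgroupOf P) ≠ 0 := Nat.card_pos.ne'
  rw [Nat.card_eq_zero_of_infinite (α := P)] at h2
  exact mul_ne_zero h4 h3 h2

/-- centralizer of a finite normal subgroup has finite index -/
lemma centralizer_finiteIndex {A : Type*} [Group A] (Q : Subgroup A) [Q.Normal] [Finite Q] :
    (Subgroup.centralizer (Q : Set A)).FiniteIndex := by
  have h : (MulAut.conjNormal : A →* MulAut Q).ker.FiniteIndex := by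
    have : Finite (MulAut Q) := Finite.of_injective (fun f : MulAut Q => (f : Q → Q))
      DFunLike.coe_injective
    exact Subgroup.finiteIndex_ker _
  refine @Subgroup.finiteIndex_of_le _ _ _ _ h ?_
  intro g hg
  rw [Subgroup.mem_centralizer_iff]
  intro q hq
  have h1 : (MulAut.conjNormal g : MulAut Q) ⟨q, hq⟩ = ⟨q, hq⟩ := by
    rw [MonoidHom.mem_ker.1 hg]; rfl
  have h2 := congrArg Subtype.val h1
  rw [MulAut.conjNormal_apply] at h2
  simp only at h2
  exact (mul_inv_eq_iff_eq_mul.1 h2).symm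

lemma finite_of_commutators {A : Type*} [Group A]
    (hnoab : ∀ (S : Subgroup A), S.Normal → (∀ a ∈ S, ∀ b ∈ S, a * b = b * a) → S = ⊥)
    (S Q : Subgroup A) [S.Normal] [Q.Normal] [Finite Q]
    (h : ∀ a ∈ S, ∀ b ∈ S, a * b * a⁻¹ * b⁻¹ ∈ Q) : Finite S := by
  by_contra hcon
  rw [not_finite_iff_infinite] at hcon
  have := centralizer_finiteIndex Q
  have hinf := infinite_inf S (Subgroup.centralizer (Q : Set A)) hcon
  have h1 : Q ⊓ Subgroup.centralizer (Q : Set A) = ⊥ := by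
    apply hnoab _ inferInstance
    intro a ha b hb
    exact Subgroup.mem_centralizer_iff.1 hb.2 a ha.1
  have h2 : S ⊓ Subgroup.centralizer (Q : Set A) = ⊥ := by
    apply hnoab _ inferInstance
    intro a ha b hb
    have h3 : a * b * a⁻¹ * b⁻¹ ∈ Q ⊓ Subgroup.centralizer (Q : Set A) :=
      ⟨h a ha.1 b hb.1, Subgroup.mul_mem _ (Subgroup.mul_mem _ (Subgroup.mul_mem _ ha.2 hb.2)
        (Subgroup.inv_mem _ ha.2)) (Subgroup.inv_mem _ hb.2)⟩
    rw [h1, Subgroup.mem_bot] at h3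
    rw [mul_inv_eq_one, mul_inv_eq_iff_eq_mul] at h3
    exact h3
  rw [h2] at hinf
  exact not_finite (⊥ : Subgroup A)

section
variable {n : ℕ} {H : Fin n → Type u} [∀ j, Group (H j)]

lemma lower_bound (B : Fin n → ℕ) (hB : ∀ j, HasIndepFamily (H j) (B j))
    (K : Subgroup (∀ j, H j)) [K.FiniteIndex] : HasIndepFamily ↥K (∑ j, B j) := by
  choose N hN hI hd using hB
  have key := hasIndep_of (ι := Σ j, Fin (B j)) (Γ := K)
    (fun p => ((N p.1 p.2).map (MonoidHom.mulSingle H p.1)).comap K.subtype) ?_ ?_ ?_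
  · simpa using key
  · rintro ⟨j, i⟩
    refine @Subgroup.normal_comap _ _ _ _ _ ?_ _
    constructor
    rintro _ ⟨y, hy, rfl⟩ g
    refine ⟨g j * y * (g j)⁻¹, (hN j i).conj_mem y hy _, ?_⟩
    ext l
    by_cases hl : l = j
    · subst hl; simp
    · simp [Pi.mulSingle_eq_of_ne hl]
  · rintro ⟨j, i⟩
    have h0 := hI j i
    have h1 : Infinite ((N j i).map (MonoidHom.mulSingle H j)) :=
      ((N j i).equivMapOfInjective (MonoidHom.mulSingle H j)
        (Pi.mulSingle_injective j)).toEquiv.infinite_iff.1 h0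
    have h2 := infinite_inf _ K h1
    refine Infinite.of_injective (fun x : ↥((N j i).map (MonoidHom.mulSingle H j) ⊓ K) =>
      (⟨⟨x.1, x.2.2⟩, x.2.1⟩ :
        ↥(((N j i).map (MonoidHom.mulSingle H j)).comap K.subtype))) ?_
    intro x y hxy
    exact Subtype.ext (congrArg (fun z : ↥(((N j i).map (MonoidHom.mulSingle H j)).comap
      K.subtype) => ((z : K) : ∀ j, H j)) hxy)
  · refine indep_comap K.subtype K.subtype_injective
      (fun p : Σ j, Fin (B j) => (N p.1 p.2).map (MonoidHom.mulSingle H p.1)) ?_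
    rintro ⟨j, i⟩
    rw [Subgroup.disjoint_def]
    rintro _ ⟨y, hy, rfl⟩ hx
    have h1 := Subgroup.mem_map_of_mem (Pi.evalMonoidHom H j) hx
    simp only [Subgroup.map_iSup] at h1
    have h2 : (Pi.evalMonoidHom H j) (MonoidHom.mulSingle H j y) = y := by simp
    rw [h2] at h1
    have h3 : y ∈ N j i ⊓ (⨆ l ∈ ({i}ᶜ : Set (Fin (B j))), N j l) := by
      refine ⟨hy, ?_⟩
      revert h1
      apply SetLike.le_def.1 (iSup₂_le ?_)
      rintro ⟨j', i'⟩ hne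
      rintro _ ⟨_, ⟨z, hz, rfl⟩, rfl⟩
      by_cases hj : j' = j
      · subst hj
        have hi : i' ∈ ({i}ᶜ : Set (Fin (B j'))) := by
          intro h; apply hne; rw [Set.mem_singleton_iff.1 h]
        have : (Pi.evalMonoidHom H j') (MonoidHom.mulSingle H j' z) = z := by simp
        rw [this]
        exact (le_iSup₂ (f := fun l (_ : l ∈ ({i}ᶜ : Set (Fin (B j')))) => N j' l) i' hi) hz
      · have : (Pi.evalMonoidHom H j) (MonoidHom.mulSingle H j' z) = 1 := by
          simp [Pi.mulSingle_eq_of_ne (Ne.symm hj)]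
        rw [this]
        exact one_mem _
    rw [hd, Subgroup.mem_bot] at h3
    rw [h3, map_one]

lemma Q_normal (K : Subgroup (∀ j, H j))
    (hsurj : ∀ j : Fin n, Function.Surjective (fun k : ↥K => (k : ∀ j, H j) j))
    (M : Subgroup K) [hM : M.Normal] (j : Fin n) :
    ((M.map K.subtype).comap (MonoidHom.mulSingle H j)).Normal := by
  constructor
  rintro x ⟨m, hm, hmx⟩ g
  obtain ⟨k, hk⟩ := hsurj j g
  refine ⟨k * m * k⁻¹, hM.conj_mem m hm k, ?_⟩
  simp only [map_mul, map_inv, hmx]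
  simp only at hk
  ext l
  by_cases hl : l = j
  · subst hl; simp [hk]
  · simp [Pi.mulSingle_eq_of_ne hl]

lemma exists_infinite
    (hnoab : ∀ (j : Fin n) (A : Subgroup (H j)), A.Normal →
      (∀ a ∈ A, ∀ b ∈ A, a * b = b * a) → A = ⊥)
    (K : Subgroup (∀ j, H j)) [K.FiniteIndex]
    (hsurj : ∀ j : Fin n, Function.Surjective (fun k : ↥K => (k : ∀ j, H j) j))
    (M : Subgroup K) [hM : M.Normal] [hI : Infinite M] :
    ∃ j, Infinite ((M.map K.subtype).comap (MonoidHom.mulSingle H j)) := by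
  by_contra! hcon
  have hR : ∀ j, Finite (M.map ((Pi.evalMonoidHom H j).comp K.subtype)) := by
    intro j
    by_contra hinf
    rw [not_finite_iff_infinite] at hinf
    have hRn : (M.map ((Pi.evalMonoidHom H j).comp K.subtype)).Normal :=
      hM.map _ (hsurj j)
    have hKn : (K.comap (MonoidHom.mulSingle H j)).Normal := by
      have := Q_normal K hsurj ⊤ j
      simpa [← MonoidHom.range_eq_map] using this
    have hKf : (K.comap (MonoidHom.mulSingle H j)).FiniteIndex :=
      ⟨by rw [Subgroup.index_comap]; exact (inferInstance : (K.subgroupOf (MonoidHom.mulSingle H j).range).FiniteIndex).index_ne_zero⟩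
    have hQn := Q_normal K hsurj M j
    have hQf : Finite _ := hcon j
    have h1 := infinite_inf _ (K.comap (MonoidHom.mulSingle H j)) hinf
    have h2 := finite_of_commutators (hnoab j)
      (M.map ((Pi.evalMonoidHom H j).comp K.subtype) ⊓ K.comap (MonoidHom.mulSingle H j))
      ((M.map K.subtype).comap (MonoidHom.mulSingle H j)) ?_
    · exact not_finite_iff_infinite.2 h1 h2
    rintro _ ⟨⟨m, hm, rfl⟩, -⟩ b ⟨-, hb⟩
    let k : K := ⟨MonoidHom.mulSingle H j b, hb⟩
    refine ⟨m * (k * m⁻¹ * k⁻¹), mul_mem hm (hM.conj_mem _ (inv_mem hm) k), ?_⟩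
    ext l
    by_cases hl : l = j
    · subst hl; simp [k, mul_assoc]
    · simp [k, Pi.mulSingle_eq_of_ne hl]
  have : Finite M := by
    refine Finite.of_injective (fun (m : M) (j : Fin n) =>
      (⟨_, Subgroup.mem_map_of_mem ((Pi.evalMonoidHom H j).comp K.subtype) m.2⟩ :
        ↥(M.map ((Pi.evalMonoidHom H j).comp K.subtype)))) ?_
    intro x y hxy
    apply Subtype.ext
    apply Subtype.ext
    funext j
    exact congrArg Subtype.val (congrFun hxy j)
  exact not_finite M

end

theorem b_of_subdirect_product
    (n : ℕ) (H : Fin n → Type u) [∀ j, Group (H j)] [∀ j, Infinite (H j)]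
    (hnoab : ∀ (j : Fin n) (A : Subgroup (H j)), A.Normal →
      (∀ a ∈ A, ∀ b ∈ A, a * b = b * a) → A = ⊥)
    (B : Fin n → ℕ) (hB : ∀ j, IsGreatest {r : ℕ | HasIndepFamily (H j) r} (B j))
    (K : Subgroup (∀ j, H j)) [K.FiniteIndex]
    (hsurj : ∀ j : Fin n, Function.Surjective (fun k : ↥K => (k : ∀ j, H j) j)) :
    IsGreatest {r : ℕ | HasIndepFamily ↥K r} (∑ j, B j) := by
  classical
  refine ⟨lower_bound B (fun j => (hB j).1) K, ?_⟩
  rintro r ⟨M, hM, hI, hd⟩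
  have hd' : iSupIndep M := fun i => disjoint_iff.2 (hd i)
  have hex : ∀ i, ∃ j, Infinite (((M i).map K.subtype).comap (MonoidHom.mulSingle H j)) := by
    intro i
    have := hM i
    have := hI i
    exact exists_infinite hnoab K hsurj (M i)
  let T : Fin n → Finset (Fin r) := fun j => Finset.univ.filter fun i =>
    Infinite (((M i).map K.subtype).comap (MonoidHom.mulSingle H j))
  have hT : ∀ j, (T j).card ≤ B j := by
    intro j
    apply (hB j).2
    have := hasIndep_of (ι := T j) (fun i =>
      ((M i).map K.subtype).comap (MonoidHom.mulSingle H j))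
      (fun i => by have := hM i; exact Q_normal K hsurj (M i) j)
      (fun i => (Finset.mem_filter.1 i.2).2)
      ((indep_comap _ (Pi.mulSingle_injective j) _
        (indep_map K.subtype K.subtype_injective M hd')).comp Subtype.val_injective)
    simpa using this
  calc r = (Finset.univ : Finset (Fin r)).card := by simp
    _ ≤ (Finset.univ.biUnion T).card := by
        apply Finset.card_le_card
        intro i _
        obtain ⟨j, hj⟩ := hex i
        exact Finset.mem_biUnion.2 ⟨j, Finset.mem_univ _, Finset.mem_filter.2 ⟨Finset.mem_univ _, hj⟩⟩
    _ ≤ ∑ j, (T j).card := Finset.card_biUnion_le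
    _ ≤ ∑ j, B j := Finset.sum_le_sum fun j _ => hT j
end
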